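/- arXiv:2601.15157 — 7 statements merged into one kernel-verified Lean document; each statement's English description precedes it below -/
import Mathlib

section
/- Let K ≥ 0 and N ≥ 1 be integers and let f : [0,∞) → ℝ be locally integrable. Then f ∈ ℱ^{K,N} if and only if ℒ^K f ∈ ℛ^N. -/
open MeasureTheory Real

/-- The primitive operator `𝒫f(x) = ∫₀ˣ f(s) ds`. -/
noncomputable def Pop (f : ℝ → ℝ) : ℝ → ℝ := fun x => ∫ s in (0:ℝ)..x, f s

/-- The operator `ℒf = f - 𝒫f`. -/
noncomputable def Lop (f : ℝ → ℝ) : ℝ → ℝ := fun x => f x - Pop f x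

/-- `f ∈ ℱ^{K,N}`: there is a polynomial `p` of degree `< K` and `c ≥ 0` with
`|f(ℓ) - p(ℓ)eˡ| ≤ c(ℓ+1)^{N-1} e^{ℓ/2}` for all `ℓ ≥ 0`.  (For `K = 0` this forces
`p = 0`, so `ℛ^N = ℱ^{0,N}` is the class of Friedman–Ramanujan remainders.) -/
def MemFR (K N : ℕ) (f : ℝ → ℝ) : Prop :=
  ∃ p : Polynomial ℝ, p.degree < (K : WithBot ℕ) ∧
    ∃ c : ℝ, 0 ≤ c ∧ ∀ ℓ : ℝ, 0 ≤ ℓ →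
      |f ℓ - Polynomial.eval ℓ p * Real.exp ℓ| ≤ c * (ℓ + 1) ^ (N - 1) * Real.exp (ℓ / 2)

lemma aux_poly (n : ℕ) : ∀ p : Polynomial ℝ, p.degree < (n : WithBot ℕ) →
    ∃ q : Polynomial ℝ, q.degree < (n : WithBot ℕ) ∧ q + Polynomial.derivative q = p := by
  induction n with
  | zero =>
    intro p hp
    exact ⟨p, hp, by
      have : p = 0 := by simpa using hp
      simp [this]⟩
  | succ n ih =>
    intro p hp
    have hd : (Polynomial.derivative p).degree < (n : WithBot ℕ) := by
      rw [Polynomial.degree_lt_iff_coeff_zero] at hp ⊢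
      intro m hm
      rw [Polynomial.coeff_derivative, hp (m+1) (by omega)]
      simp
    obtain ⟨q, hq, hqe⟩ := ih _ hd
    refine ⟨p - q, ?_, ?_⟩
    · refine (Polynomial.degree_sub_le _ _).trans_lt (max_lt hp (hq.trans ?_))
      exact_mod_cast Nat.lt_succ_self n
    · rw [Polynomial.derivative_sub]
      rw [← hqe]; ring

lemma aux_deriv_deg (n : ℕ) (p : Polynomial ℝ) (hp : p.degree < ((n+1 : ℕ) : WithBot ℕ)) :
    (Polynomial.derivative p).degree < (n : WithBot ℕ) := by
  rw [Polynomial.degree_lt_iff_coeff_zero] at hp ⊢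
  intro m hm
  rw [Polynomial.coeff_derivative, hp (m+1) (by omega)]
  simp

lemma aux_antideriv (n : ℕ) (p : Polynomial ℝ) (hp : p.degree < (n : WithBot ℕ)) :
    ∃ q : Polynomial ℝ, q.degree < ((n+1 : ℕ) : WithBot ℕ) ∧ Polynomial.derivative q = p ∧
      q.eval 0 = 0 := by
  refine ⟨∑ i ∈ Finset.range n, Polynomial.monomial (i+1) (p.coeff i / (i+1)), ?_, ?_, ?_⟩
  · rw [Polynomial.degree_lt_iff_coeff_zero]
    intro m hm
    rw [Polynomial.finsetSum_coeff]
    refine Finset.sum_eq_zero fun i hi => ?_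
    rw [Polynomial.coeff_monomial, if_neg]
    have := Finset.mem_range.1 hi
    omega
  · rw [Polynomial.derivative_sum]
    have hsum : p = ∑ i ∈ Finset.range n, Polynomial.monomial i (p.coeff i) := by
      rw [Polynomial.degree_lt_iff_coeff_zero] at hp
      ext m
      rw [Polynomial.finsetSum_coeff]
      simp only [Polynomial.coeff_monomial, Finset.sum_ite_eq', Finset.mem_range]
      split_ifs with h
      · rfl
      · exact hp m (by omega)
    conv_rhs => rw [hsum]
    refine Finset.sum_congr rfl fun i _ => ?_
    rw [Polynomial.derivative_monomial]
    simp only [Nat.add_sub_cancel]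
    congr 1
    push_cast
    field_simp
  · rw [Polynomial.eval_finsetSum]
    refine Finset.sum_eq_zero fun i _ => ?_
    simp

lemma aux_int (q : Polynomial ℝ) (x : ℝ) :
    Pop (fun s => (q + Polynomial.derivative q).eval s * Real.exp s) x
      = q.eval x * Real.exp x - q.eval 0 := by
  unfold Pop
  rw [intervalIntegral.integral_eq_sub_of_hasDerivAt (f := fun s => q.eval s * Real.exp s)]
  · simp
  · intro s _
    have := (q.hasDerivAt s).mul (Real.hasDerivAt_exp s)
    refine this.congr_deriv ?_
    simp; ring
  · apply Continuous.intervalIntegrable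
    exact (Polynomial.continuous _).mul Real.continuous_exp

lemma aux_ii {f : ℝ → ℝ} (hf : LocallyIntegrable f) {a b : ℝ} :
    IntervalIntegrable f volume a b :=
  (hf.integrableOn_isCompact isCompact_uIcc).intervalIntegrable

lemma Pop_sub {f g : ℝ → ℝ} (hf : LocallyIntegrable f) (hg : LocallyIntegrable g) (x : ℝ) :
    Pop (fun s => f s - g s) x = Pop f x - Pop g x :=
  intervalIntegral.integral_sub (aux_ii hf) (aux_ii hg)

lemma Pop_add {f g : ℝ → ℝ} (hf : LocallyIntegrable f) (hg : LocallyIntegrable g) (x : ℝ) :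
    Pop (fun s => f s + g s) x = Pop f x + Pop g x :=
  intervalIntegral.integral_add (aux_ii hf) (aux_ii hg)

lemma Pop_cont {f : ℝ → ℝ} (hf : LocallyIntegrable f) : Continuous (Pop f) :=
  intervalIntegral.continuous_primitive (fun _ _ => aux_ii hf) 0

lemma Lop_li {f : ℝ → ℝ} (hf : LocallyIntegrable f) : LocallyIntegrable (Lop f) :=
  hf.sub (Pop_cont hf).locallyIntegrable

lemma aux_bound (M : ℕ) (c : ℝ) (hc : 0 ≤ c) (r : ℝ → ℝ)
    (hr : ∀ x, 0 ≤ x → |r x| ≤ c * (x+1)^M * Real.exp (x/2)) (x : ℝ) (hx : 0 ≤ x) :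
    |Pop r x| ≤ (2*c) * (x+1)^M * Real.exp (x/2) := by
  have h1 : |Pop r x| ≤ ∫ s in (0:ℝ)..x, c * (x+1)^M * Real.exp (s/2) := by
    unfold Pop
    rw [← Real.norm_eq_abs]
    refine intervalIntegral.norm_integral_le_of_norm_le hx (Filter.Eventually.of_forall ?_) ?_
    · intro s hs
      rw [Real.norm_eq_abs]
      refine (hr s hs.1.le).trans ?_
      have := hs.1
      have := hs.2
      gcongr
    · apply Continuous.intervalIntegrable
      fun_prop
  have h2 : ∫ s in (0:ℝ)..x, c * (x+1)^M * Real.exp (s/2)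
      = c * (x+1)^M * (2 * Real.exp (x/2) - 2) := by
    rw [intervalIntegral.integral_const_mul]
    congr 1
    rw [intervalIntegral.integral_eq_sub_of_hasDerivAt (f := fun s => 2 * Real.exp (s/2))]
    · simp
    · intro s _
      have := (((hasDerivAt_id s).div_const 2).exp).const_mul 2
      refine this.congr_deriv ?_
      simp; ring
    · apply Continuous.intervalIntegrable
      fun_prop
  have h3 : 0 ≤ c * (x+1)^M := by positivity
  rw [h2] at h1
  nlinarith

lemma aux_integrable (M : ℕ) :
    IntegrableOn (fun u : ℝ => (u+1)^M * Real.exp (-(u/2))) (Set.Ioi 0) := by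
  refine integrable_of_isBigO_exp_neg (b := 1/4) (by norm_num) (by fun_prop) ?_
  have h := (isLittleO_pow_exp_pos_mul_atTop (k := M) (b := 1/4) (by norm_num)).isBigO
  have h1 : (fun u : ℝ => (u+1)^M) =O[Filter.atTop] fun u : ℝ => u^M := by
    refine Asymptotics.IsBigO.pow ?_ M
    refine Asymptotics.IsBigO.of_bound 2 ?_
    filter_upwards [Filter.eventually_ge_atTop 1] with u hu
    rw [Real.norm_eq_abs, Real.norm_eq_abs, abs_of_nonneg (by linarith), abs_of_nonneg (by linarith)]
    linarith
  have h2 := (h1.trans h).mul (Asymptotics.isBigO_refl (fun u : ℝ => Real.exp (-(u/2))) Filter.atTop)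
  refine h2.congr_right ?_
  intro u
  rw [← Real.exp_add]
  congr 1; ring

lemma aux_tail (M : ℕ) (c : ℝ) (hc : 0 ≤ c) (R : ℝ → ℝ) (hRc : Continuous R)
    (hR : ∀ x, 0 ≤ x → |R x| ≤ c * (x+1)^M * Real.exp (x/2)) :
    ∃ C D : ℝ, 0 ≤ D ∧ ∀ x, 0 ≤ x →
      |(∫ s in (0:ℝ)..x, Real.exp (-s) * R s) - C| ≤ D * (x+1)^M * Real.exp (-(x/2)) := by
  set k : ℝ → ℝ := fun u => (u+1)^M * Real.exp (-(u/2)) with hk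
  have hkI := aux_integrable M
  have hb : ∀ s, 0 ≤ s → |Real.exp (-s) * R s| ≤ c * k s := by
    intro s hs
    rw [abs_mul, abs_of_pos (Real.exp_pos _)]
    calc Real.exp (-s) * |R s| ≤ Real.exp (-s) * (c * (s+1)^M * Real.exp (s/2)) := by
          gcongr; exact hR s hs
      _ = c * ((s+1)^M * (Real.exp (-s) * Real.exp (s/2))) := by ring
      _ = c * k s := by
          rw [← Real.exp_add, hk]
          simp only
          congr 3; ring
  have hI : IntegrableOn (fun s => Real.exp (-s) * R s) (Set.Ioi 0) := by
    refine Integrable.mono' (hkI.const_mul c) ?_ ?_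
    · exact (by fun_prop : Continuous fun s => Real.exp (-s) * R s).aestronglyMeasurable
    · refine (ae_restrict_iff' measurableSet_Ioi).2 (Filter.Eventually.of_forall ?_)
      intro s hs
      exact hb s (le_of_lt hs)
  refine ⟨∫ s in Set.Ioi 0, Real.exp (-s) * R s, c * ∫ u in Set.Ioi 0, k u, ?_, ?_⟩
  · refine mul_nonneg hc (setIntegral_nonneg measurableSet_Ioi ?_)
    intro u hu
    have : (0:ℝ) < u := hu
    simp only [hk]; positivity
  · intro x hx
    have hIx : IntegrableOn (fun s => Real.exp (-s) * R s) (Set.Ioi x) :=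
      hI.mono_set (Set.Ioi_subset_Ioi hx)
    have e1 := intervalIntegral.integral_interval_add_Ioi (a := 0) (b := x) hI hIx
    rw [← e1, sub_add_cancel_left, abs_neg, ← Real.norm_eq_abs]
    have e2 : ∫ s in Set.Ioi x, Real.exp (-s) * R s
        = ∫ u in Set.Ioi 0, Real.exp (-(u+x)) * R (u+x) := by
      have := (measurePreserving_add_right volume x).setIntegral_preimage_emb
        (measurableEmbedding_addRight x) (fun s => Real.exp (-s) * R s) (Set.Ioi x)
      rw [← this]; simp
    rw [e2]
    calc ‖∫ u in Set.Ioi 0, Real.exp (-(u+x)) * R (u+x)‖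
        ≤ ∫ u in Set.Ioi 0, (c * ((x+1)^M * Real.exp (-(x/2)))) * k u := by
          refine norm_integral_le_of_norm_le (hkI.const_mul _) ?_
          refine (ae_restrict_iff' measurableSet_Ioi).2 (Filter.Eventually.of_forall ?_)
          intro u hu
          have hu : (0:ℝ) < u := hu
          refine (hb (u+x) (by positivity)).trans ?_
          rw [mul_assoc]
          refine mul_le_mul_of_nonneg_left ?_ hc
          simp only [hk]
          calc (u+x+1)^M * Real.exp (-((u+x)/2))
              ≤ ((x+1)*(u+1))^M * Real.exp (-((u+x)/2)) := by
                gcongr; nlinarith [mul_nonneg hx hu.le]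
            _ = _ := by
                rw [mul_pow, show -((u+x)/2) = -(x/2) + -(u/2) by ring, Real.exp_add]; ring
      _ = _ := by
          rw [integral_const_mul]; ring

lemma MemFR_step (K N : ℕ) (f : ℝ → ℝ) (hf : LocallyIntegrable f) :
    MemFR (K+1) N f ↔ MemFR K N (Lop f) := by
  constructor
  · rintro ⟨p, hp, c, hc, hb⟩
    obtain ⟨q, hq, rfl⟩ := aux_poly _ p hp
    refine ⟨Polynomial.derivative q, aux_deriv_deg _ _ hq, 3 * c + |q.eval 0|, by positivity, ?_⟩
    intro x hx
    have hE : LocallyIntegrable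
        (fun s => (q + Polynomial.derivative q).eval s * Real.exp s) :=
      ((Polynomial.continuous _).mul Real.continuous_exp).locallyIntegrable
    have h1 := aux_bound (N-1) c hc _ hb x hx
    rw [Pop_sub hf hE, aux_int] at h1
    have h2 := hb x hx
    have h3 : |q.eval 0| ≤ |q.eval 0| * ((x+1)^(N-1) * Real.exp (x/2)) := by
      refine le_mul_of_one_le_right (abs_nonneg _) ?_
      exact one_le_mul_of_one_le_of_one_le (one_le_pow₀ (by linarith))
        (Real.one_le_exp (by positivity))
    have e : Lop f x - (Polynomial.derivative q).eval x * Real.exp x =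
        (f x - (q + Polynomial.derivative q).eval x * Real.exp x)
        - (Pop f x - (q.eval x * Real.exp x - q.eval 0)) + q.eval 0 := by
      simp only [Lop, Polynomial.eval_add]; ring
    rw [e]
    refine (abs_add_le _ _).trans ?_
    have := abs_sub (f x - (q + Polynomial.derivative q).eval x * Real.exp x)
       (Pop f x - (q.eval x * Real.exp x - q.eval 0))
    nlinarith
  · rintro ⟨q, hq, c, hc, hb⟩
    obtain ⟨Q, hQ, rfl, hQ0⟩ := aux_antideriv _ q hq
    set E : ℝ → ℝ := fun s => (Q + Polynomial.derivative Q).eval s * Real.exp s with hEdef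
    have hE : LocallyIntegrable E :=
      ((Polynomial.continuous _).mul Real.continuous_exp).locallyIntegrable
    set h : ℝ → ℝ := fun s => f s - E s with hh
    have hhl : LocallyIntegrable h := hf.sub hE
    set r : ℝ → ℝ := Lop h with hr
    have hrl : LocallyIntegrable r := Lop_li hhl
    have hre : ∀ x, r x = Lop f x - (Polynomial.derivative Q).eval x * Real.exp x := by
      intro x
      simp only [hr, Lop]
      rw [Pop_sub hf hE, aux_int, hQ0]
      simp only [hh, hEdef, Polynomial.eval_add]; ring
    have hrb : ∀ x, 0 ≤ x → |r x| ≤ c * (x+1)^(N-1) * Real.exp (x/2) := by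
      intro x hx; rw [hre]; exact hb x hx
    have hRb := aux_bound (N-1) c hc r hrb
    have hRc := Pop_cont hrl
    have hHc := Pop_cont hhl
    have hH : ∀ x, Pop h x = Pop r x + Pop (Pop h) x := by
      intro x
      rw [← Pop_add hrl hHc.locallyIntegrable]
      congr 1
      funext s
      simp only [hr, Lop]; ring
    obtain ⟨C, D, hD, hCD⟩ := aux_tail (N-1) (2*c) (by positivity) _ hRc hRb
    have hU : ∀ x, ∫ s in (0:ℝ)..x, Real.exp (-s) * Pop r s
        = Real.exp (-x) * Pop (Pop h) x := by
      intro x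
      rw [intervalIntegral.integral_eq_sub_of_hasDerivAt
        (f := fun s => Real.exp (-s) * Pop (Pop h) s)]
      · simp [Pop]
      · intro s _
        have d1 : HasDerivAt (Pop (Pop h)) (Pop h s) s :=
          intervalIntegral.integral_hasDerivAt_right (hHc.intervalIntegrable _ _)
            (hHc.stronglyMeasurableAtFilter _ _) hHc.continuousAt
        have := ((hasDerivAt_id s).neg.exp).mul d1
        refine this.congr_deriv ?_
        rw [hH s]; simp; ring
      · apply Continuous.intervalIntegrable
        fun_prop
    refine ⟨Q + Polynomial.derivative Q + Polynomial.C C, ?_, 3 * c + D, by positivity, ?_⟩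
    · have hlt : (K : WithBot ℕ) < ((K+1 : ℕ) : WithBot ℕ) := by
        exact_mod_cast Nat.lt_succ_self K
      refine (Polynomial.degree_add_le _ _).trans_lt (max_lt
        ((Polynomial.degree_add_le _ _).trans_lt (max_lt hQ (hq.trans hlt))) ?_)
      refine Polynomial.degree_C_le.trans_lt ?_
      exact_mod_cast Nat.succ_pos K
    · intro x hx
      have h1 := hCD x hx
      rw [hU] at h1
      have e : f x - (Q + Polynomial.derivative Q + Polynomial.C C).eval x * Real.exp x
          = r x + Pop r x + Real.exp x * (Real.exp (-x) * Pop (Pop h) x - C) := by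
        have e1 : Real.exp x * Real.exp (-x) = 1 := by rw [← Real.exp_add]; simp
        have e2 : r x = f x - E x - Pop h x := rfl
        have e3 := hH x
        have e4 : E x = (Q + Polynomial.derivative Q).eval x * Real.exp x := rfl
        rw [Polynomial.eval_add, Polynomial.eval_C, mul_sub, ← mul_assoc, e1, e2, e4]
        linarith
      rw [e]
      have h2 : |Real.exp x * (Real.exp (-x) * Pop (Pop h) x - C)|
          ≤ D * (x+1)^(N-1) * Real.exp (x/2) := by
        rw [abs_mul, abs_of_pos (Real.exp_pos _)]
        calc _ ≤ Real.exp x * (D * (x+1)^(N-1) * Real.exp (-(x/2))) := by gcongr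
          _ = D * (x+1)^(N-1) * (Real.exp x * Real.exp (-(x/2))) := by ring
          _ = _ := by rw [← Real.exp_add]; congr 2; ring
      have h3 := hrb x hx
      have h4 := hRb x hx
      have h5 := abs_add_three (r x) (Pop r x)
        (Real.exp x * (Real.exp (-x) * Pop (Pop h) x - C))
      linarith

lemma MemFR_iter (K N : ℕ) : ∀ (f : ℝ → ℝ), LocallyIntegrable f →
    (MemFR K N f ↔ MemFR 0 N (Lop^[K] f)) := by
  induction K with
  | zero => intro f _; rfl
  | succ K ih =>
    intro f hf
    rw [MemFR_step K N f hf, ih _ (Lop_li hf), Function.iterate_succ_apply]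

lemma Lop_congr {f g : ℝ → ℝ} (h : ∀ x, 0 ≤ x → f x = g x) (x : ℝ) (hx : 0 ≤ x) :
    Lop f x = Lop g x := by
  simp only [Lop, Pop]
  rw [h x hx, intervalIntegral.integral_congr]
  intro s hs
  rw [Set.uIcc_of_le hx] at hs
  exact h s hs.1

lemma Lop_iter_congr (K : ℕ) : ∀ {f g : ℝ → ℝ}, (∀ x, 0 ≤ x → f x = g x) →
    ∀ x, 0 ≤ x → Lop^[K] f x = Lop^[K] g x := by
  induction K with
  | zero => intro f g h; exact h
  | succ K ih =>
    intro f g h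
    simp only [Function.iterate_succ_apply]
    exact ih (Lop_congr h)

lemma MemFR_congr {K N : ℕ} {f g : ℝ → ℝ} (h : ∀ x, 0 ≤ x → f x = g x) :
    MemFR K N f ↔ MemFR K N g := by
  unfold MemFR
  refine exists_congr fun p => and_congr_right fun _ => exists_congr fun c =>
    and_congr_right fun _ => forall_congr' fun x => forall_congr' fun hx => ?_
  rw [h x hx]

/-- `f ∈ ℱ^{K,N}` if and only if `ℒ^K f ∈ ℛ^N = ℱ^{0,N}`. -/
theorem memFR_iff_Lop_iterate_memRemainder (K N : ℕ) (hN : 1 ≤ N) (f : ℝ → ℝ)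
    (hf : LocallyIntegrableOn f (Set.Ici (0:ℝ))) :
    MemFR K N f ↔ MemFR 0 N (Lop^[K] f) := by
  have hg : ∀ x, 0 ≤ x → f x = (Set.Ici (0:ℝ)).indicator f x := by
    intro x hx
    rw [Set.indicator_of_mem (Set.mem_Ici.2 hx)]
  have hgl : LocallyIntegrable ((Set.Ici (0:ℝ)).indicator f) := by
    rw [locallyIntegrable_iff]
    intro k hk
    rw [IntegrableOn, integrable_indicator_iff measurableSet_Ici, IntegrableOn,
      Measure.restrict_restrict measurableSet_Ici]
    exact hf.integrableOn_compact_subset Set.inter_subset_left (hk.inter_left isClosed_Ici)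
  rw [MemFR_congr hg, MemFR_iter K N _ hgl]
  exact MemFR_congr fun x hx => (Lop_iter_congr K hg x hx).symm
end

section
/- Let K ≥ 0 and N ≥ 1 be integers and let f : [0,∞) → ℝ be locally integrable. Then f ∈ ℱ_w^{K,N} if and only if ℒ^K f ∈ ℛ_w^N. -/
open MeasureTheory Real

/-- `f ∈ ℱ_w^{K,N}`: there is a polynomial `p` of degree `< K` and `c ≥ 0` with
`∫₀^ℓ |f(s) - p(s)eˢ| ds ≤ c(ℓ+1)^{N-1} e^{ℓ/2}` for all `ℓ ≥ 0`.  (For `K = 0` this forces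
`p = 0`, so `ℛ_w^N = ℱ_w^{0,N}` is the class of weak Friedman–Ramanujan remainders.) -/
def MemFRw (K N : ℕ) (f : ℝ → ℝ) : Prop :=
  ∃ p : Polynomial ℝ, p.degree < (K : WithBot ℕ) ∧
    ∃ c : ℝ, 0 ≤ c ∧ ∀ ℓ : ℝ, 0 ≤ ℓ →
      (∫ s in (0:ℝ)..ℓ, |f s - Polynomial.eval s p * Real.exp s|) ≤
        c * (ℓ + 1) ^ (N - 1) * Real.exp (ℓ / 2)

def LI (f : ℝ → ℝ) : Prop := ∀ x : ℝ, 0 ≤ x → IntervalIntegrable f volume 0 x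

def Bd (n : ℕ) (r : ℝ → ℝ) : Prop :=
  ∃ c : ℝ, 0 ≤ c ∧ ∀ ℓ : ℝ, 0 ≤ ℓ → (∫ s in (0:ℝ)..ℓ, |r s|) ≤ c * (ℓ + 1) ^ n * Real.exp (ℓ / 2)

lemma LI.add {f g : ℝ → ℝ} (hf : LI f) (hg : LI g) : LI (fun x => f x + g x) :=
  fun x hx => (hf x hx).add (hg x hx)

lemma LI.sub {f g : ℝ → ℝ} (hf : LI f) (hg : LI g) : LI (fun x => f x - g x) :=
  fun x hx => (hf x hx).sub (hg x hx)

lemma LI_of_cont {f : ℝ → ℝ} (hf : ContinuousOn f (Set.Ici 0)) : LI f := by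
  intro x hx
  apply ContinuousOn.intervalIntegrable
  rw [Set.uIcc_of_le hx]
  exact hf.mono Set.Icc_subset_Ici_self

lemma LI.pop_cont {f : ℝ → ℝ} (hf : LI f) : ContinuousOn (Pop f) (Set.Ici 0) := by
  intro x hx
  have hx0 : (0:ℝ) ≤ x := hx
  have h := intervalIntegral.continuousOn_primitive_interval' (hf (x+1) (by linarith))
    (Set.left_mem_uIcc)
  rw [Set.uIcc_of_le (by linarith)] at h
  have h2 := h x ⟨hx0, by linarith⟩
  refine h2.mono_of_mem_nhdsWithin ?_
  exact mem_nhdsWithin.2 ⟨Set.Iio (x+1), isOpen_Iio, by simp, fun y hy => ⟨hy.2, le_of_lt hy.1⟩⟩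

lemma LI.lop {f : ℝ → ℝ} (hf : LI f) : LI (Lop f) := hf.sub (LI_of_cont hf.pop_cont)

lemma pop_hasDeriv {f : ℝ → ℝ} (hf : ContinuousOn f (Set.Ici 0)) {x : ℝ} (hx : 0 < x) :
    HasDerivAt (Pop f) (f x) x := by
  apply intervalIntegral.integral_hasDerivAt_right (LI_of_cont hf x hx.le)
  · exact (hf.mono Set.Ioi_subset_Ici_self).stronglyMeasurableAtFilter isOpen_Ioi x hx
  · exact hf.continuousAt (Ici_mem_nhds hx)

lemma Bd.add {n : ℕ} {f g : ℝ → ℝ} (hf : LI f) (hg : LI g) (bf : Bd n f) (bg : Bd n g) :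
    Bd n (fun x => f x + g x) := by
  obtain ⟨c, hc, h⟩ := bf
  obtain ⟨d, hd, k⟩ := bg
  refine ⟨c + d, by positivity, fun ℓ hℓ => ?_⟩
  calc (∫ s in (0:ℝ)..ℓ, |f s + g s|) ≤ ∫ s in (0:ℝ)..ℓ, (|f s| + |g s|) := by
        apply intervalIntegral.integral_mono_on hℓ
        · exact ((hf ℓ hℓ).add (hg ℓ hℓ)).abs
        · exact (hf ℓ hℓ).abs.add (hg ℓ hℓ).abs
        · intro x _
          exact abs_add_le _ _
    _ = (∫ s in (0:ℝ)..ℓ, |f s|) + ∫ s in (0:ℝ)..ℓ, |g s| :=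
        intervalIntegral.integral_add (hf ℓ hℓ).abs (hg ℓ hℓ).abs
    _ ≤ _ := by linarith [h ℓ hℓ, k ℓ hℓ]

lemma Bd.congr {n : ℕ} {f g : ℝ → ℝ} (h : ∀ x, 0 ≤ x → f x = g x) (bf : Bd n f) : Bd n g := by
  obtain ⟨c, hc, k⟩ := bf
  refine ⟨c, hc, fun ℓ hℓ => ?_⟩
  rw [← intervalIntegral.integral_congr (f := fun s => |f s|)]
  · exact k ℓ hℓ
  · intro x hx
    rw [Set.uIcc_of_le hℓ] at hx
    simp only [h x hx.1]

lemma Bd_of_pt {n : ℕ} {f : ℝ → ℝ} (hf : LI f) (c : ℝ) (hc : 0 ≤ c)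
    (h : ∀ x, 0 ≤ x → |f x| ≤ c * (x + 1) ^ n * Real.exp (x / 2)) : Bd n f := by
  refine ⟨2 * c, by positivity, fun ℓ hℓ => ?_⟩
  have hi : (∫ s in (0:ℝ)..ℓ, Real.exp (s / 2)) = 2 * Real.exp (ℓ / 2) - 2 := by
    rw [intervalIntegral.integral_comp_div (fun s => Real.exp s) (by norm_num)]
    simp
    ring
  calc (∫ s in (0:ℝ)..ℓ, |f s|) ≤ ∫ s in (0:ℝ)..ℓ, (c * (ℓ + 1) ^ n) * Real.exp (s / 2) := by
        apply intervalIntegral.integral_mono_on hℓ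
        · exact (hf ℓ hℓ).abs
        · exact Continuous.intervalIntegrable (by fun_prop) _ _
        · intro x hx
          refine (h x hx.1).trans ?_
          have := hx.1
          have := hx.2
          gcongr
    _ = (c * (ℓ + 1) ^ n) * (2 * Real.exp (ℓ / 2) - 2) := by
        rw [intervalIntegral.integral_const_mul, hi]
    _ ≤ _ := by
        have : 0 ≤ c * (ℓ + 1) ^ n := by positivity
        linarith

lemma pop_bound {n : ℕ} {r : ℝ → ℝ} (b : Bd n r) :
    ∃ c : ℝ, 0 ≤ c ∧ ∀ x, 0 ≤ x → |Pop r x| ≤ c * (x + 1) ^ n * Real.exp (x / 2) := by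
  obtain ⟨c, hc, h⟩ := b
  exact ⟨c, hc, fun x hx =>
    (intervalIntegral.abs_integral_le_integral_abs hx).trans (h x hx)⟩

lemma const_bound (n : ℕ) (a : ℝ) {x : ℝ} (hx : 0 ≤ x) :
    |a| ≤ |a| * (x + 1) ^ n * Real.exp (x / 2) := by
  have h1 : 1 ≤ (x + 1) ^ n := one_le_pow₀ (by linarith)
  have h2 : 1 ≤ Real.exp (x / 2) := Real.one_le_exp (by linarith)
  have h3 : 1 ≤ (x + 1) ^ n * Real.exp (x / 2) := one_le_mul_of_one_le_of_one_le h1 h2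
  rw [mul_assoc]
  exact le_mul_of_one_le_right (abs_nonneg a) h3

lemma tail_bound {n : ℕ} {u : ℝ → ℝ} (hu : ContinuousOn u (Set.Ici 0)) (c : ℝ) (hc : 0 ≤ c)
    (h : ∀ x, 0 ≤ x → |u x| ≤ c * (x + 1) ^ n * Real.exp (x / 2)) :
    ∃ A C : ℝ, 0 ≤ C ∧ ∀ x, 0 ≤ x →
      |Real.exp x * (∫ s in (0:ℝ)..x, Real.exp (-s) * u s) - A * Real.exp x| ≤
        C * (x + 1) ^ n * Real.exp (x / 2) := by
  obtain ⟨D, hD, hDb⟩ : ∃ D : ℝ, 0 ≤ D ∧ ∀ t : ℝ, 0 ≤ t → (1 + t) ^ n ≤ D * Real.exp (t / 4) := by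
    refine ⟨(n.factorial : ℝ) * 4 ^ n * Real.exp (1 / 4), by positivity, fun t ht => ?_⟩
    have := Real.pow_div_factorial_le_exp (x := (1 + t) / 4) (by positivity) n
    rw [div_le_iff₀ (by positivity), div_pow, div_le_iff₀ (by positivity)] at this
    have e : Real.exp ((1 + t) / 4) = Real.exp (1 / 4) * Real.exp (t / 4) := by
      rw [← Real.exp_add]; ring_nf
    rw [e] at this
    linarith
  have key : ∀ x, 0 ≤ x → ∀ s, x ≤ s → ‖Real.exp (-s) * u s‖ ≤
      (c * D * (x + 1) ^ n * Real.exp (-x / 4)) * Real.exp (-(1 / 4) * s) := by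
    intro x hx s hs
    rw [Real.norm_eq_abs, abs_mul, abs_of_pos (Real.exp_pos _)]
    have h1 : (s + 1) ^ n ≤ (x + 1) ^ n * (1 + (s - x)) ^ n := by
      rw [← mul_pow]
      apply pow_le_pow_left₀ (by linarith)
      nlinarith
    have h2 := hDb (s - x) (by linarith)
    calc Real.exp (-s) * |u s| ≤ Real.exp (-s) *
          (c * ((x + 1) ^ n * (D * Real.exp ((s - x) / 4))) * Real.exp (s / 2)) := by
          refine mul_le_mul_of_nonneg_left ((h s (by linarith)).trans ?_) (Real.exp_pos _).le
          refine mul_le_mul_of_nonneg_right ?_ (Real.exp_pos _).le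
          refine mul_le_mul_of_nonneg_left (h1.trans ?_) hc
          exact mul_le_mul_of_nonneg_left h2 (by positivity)
      _ = (c * D * (x + 1) ^ n) *
          (Real.exp (-s) * Real.exp ((s - x) / 4) * Real.exp (s / 2)) := by ring
      _ = (c * D * (x + 1) ^ n) * (Real.exp (-x / 4) * Real.exp (-(1 / 4) * s)) := by
          rw [← Real.exp_add, ← Real.exp_add, ← Real.exp_add]
          ring_nf
      _ = _ := by ring
  have hcont : ContinuousOn (fun s => Real.exp (-s) * u s) (Set.Ici 0) :=
    ContinuousOn.mul (by fun_prop) hu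
  have hdom : ∀ x : ℝ, IntegrableOn (fun s => Real.exp (-(1 / 4) * s)) (Set.Ioi x) := fun x =>
    integrableOn_exp_mul_Ioi (by norm_num) x
  have hint : ∀ x, 0 ≤ x → IntegrableOn (fun s => Real.exp (-s) * u s) (Set.Ioi x) := by
    intro x hx
    refine Integrable.mono' ((hdom x).const_mul (c * D * (x + 1) ^ n * Real.exp (-x / 4))) ?_ ?_
    · exact (hcont.mono (fun y hy => hx.trans (le_of_lt hy))).aestronglyMeasurable measurableSet_Ioi
    · exact (ae_restrict_iff' measurableSet_Ioi).2
        (Filter.Eventually.of_forall fun s hs => key x hx s (le_of_lt hs))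
  refine ⟨∫ s in Set.Ioi (0:ℝ), Real.exp (-s) * u s, 4 * c * D, by positivity, fun x hx => ?_⟩
  rw [← intervalIntegral.integral_interval_add_Ioi (hint 0 le_rfl) (hint x hx)]
  have hb : ‖∫ s in Set.Ioi x, Real.exp (-s) * u s‖ ≤
      (c * D * (x + 1) ^ n * Real.exp (-x / 4)) * (4 * Real.exp (-x / 4)) := by
    refine (norm_integral_le_of_norm_le
      ((hdom x).const_mul (c * D * (x + 1) ^ n * Real.exp (-x / 4)))
      ((ae_restrict_iff' measurableSet_Ioi).2
        (Filter.Eventually.of_forall fun s hs => key x hx s (le_of_lt hs)))).trans ?_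
    rw [integral_const_mul, integral_exp_mul_Ioi (by norm_num) x]
    apply le_of_eq
    ring_nf
  rw [Real.norm_eq_abs] at hb
  set T := ∫ s in Set.Ioi x, Real.exp (-s) * u s
  set S := ∫ s in (0:ℝ)..x, Real.exp (-s) * u s
  have e1 : Real.exp x * S - (S + T) * Real.exp x = -(Real.exp x * T) := by ring
  rw [e1, abs_neg, abs_mul, abs_of_pos (Real.exp_pos x)]
  calc Real.exp x * |T| ≤ Real.exp x *
      ((c * D * (x + 1) ^ n * Real.exp (-x / 4)) * (4 * Real.exp (-x / 4))) := by gcongr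
    _ = (4 * c * D) * (x + 1) ^ n * (Real.exp x * Real.exp (-x / 4) * Real.exp (-x / 4)) := by ring
    _ = _ := by
      rw [← Real.exp_add, ← Real.exp_add]
      ring_nf

open Polynomial in
lemma deg_deriv {K : ℕ} {p : ℝ[X]} (hp : p.degree < ((K + 1 : ℕ) : WithBot ℕ)) :
    (derivative p).degree < (K : WithBot ℕ) := by
  rw [degree_lt_iff_coeff_zero] at hp ⊢
  intro m hm
  rw [coeff_derivative, hp (m + 1) (by omega), zero_mul]

open Polynomial in
lemma exists_q (K : ℕ) : ∀ p : ℝ[X], p.degree < (K : WithBot ℕ) →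
    ∃ q : ℝ[X], q.degree < (K : WithBot ℕ) ∧ q + derivative q = p := by
  induction K with
  | zero =>
    intro p hp
    have : p = 0 := by
      rw [degree_lt_iff_coeff_zero] at hp
      ext m
      simpa using hp m (by omega)
    exact ⟨0, by simp, by simp [this]⟩
  | succ K ih =>
    intro p hp
    obtain ⟨q, hq, e⟩ := ih _ (deg_deriv hp)
    refine ⟨p - q, ?_, ?_⟩
    · rw [degree_lt_iff_coeff_zero] at hp hq ⊢
      intro m hm
      rw [coeff_sub, hp m hm, hq m (by omega), sub_zero]
    · rw [derivative_sub, ← e]; ring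

open Polynomial in
lemma exists_anti (K : ℕ) (q : ℝ[X]) (hq : q.degree < (K : WithBot ℕ)) :
    ∃ Q : ℝ[X], Q.degree < ((K + 1 : ℕ) : WithBot ℕ) ∧ derivative Q = q := by
  refine ⟨∑ i ∈ Finset.range K, monomial (i + 1) (q.coeff i / (i + 1)), ?_, ?_⟩
  · rw [degree_lt_iff_coeff_zero]
    intro m hm
    rw [finsetSum_coeff]
    apply Finset.sum_eq_zero
    intro i hi
    rw [coeff_monomial, if_neg]
    have := Finset.mem_range.1 hi
    omega
  · rw [derivative_sum]
    ext m
    rw [finsetSum_coeff]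
    have : ∀ i ∈ Finset.range K,
        (derivative (monomial (i + 1) (q.coeff i / (i + 1)))).coeff m
          = if i = m then q.coeff m else 0 := by
      intro i _
      rw [derivative_monomial, coeff_monomial]
      have : (i : ℝ) + 1 ≠ 0 := by positivity
      by_cases him : i = m
      · subst him
        simp
        field_simp
      · simp [him]
    rw [Finset.sum_congr rfl this, Finset.sum_ite_eq']
    split_ifs with hm
    · rfl
    · rw [degree_lt_iff_coeff_zero] at hq
      exact (hq m (by simpa using hm)).symm

open Polynomial in
lemma pop_poly (p q : ℝ[X]) (e : q + derivative q = p) (x : ℝ) :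
    Pop (fun s => p.eval s * Real.exp s) x = q.eval x * Real.exp x - q.eval 0 := by
  unfold Pop
  rw [intervalIntegral.integral_eq_sub_of_hasDerivAt (f := fun s => q.eval s * Real.exp s)]
  · simp
  · intro y _
    have := (q.hasDerivAt y).mul (Real.hasDerivAt_exp y)
    refine HasDerivAt.congr_deriv this ?_
    rw [← e, eval_add]; ring
  · exact Continuous.intervalIntegrable (by fun_prop) _ _

open Polynomial in
lemma LI_poly (p : ℝ[X]) : LI (fun s => p.eval s * Real.exp s) :=
  LI_of_cont (Continuous.continuousOn (by fun_prop))

open Polynomial in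
lemma fwd {K n : ℕ} {f : ℝ → ℝ} (hf : LI f) (p : ℝ[X]) (hp : p.degree < ((K + 1 : ℕ) : WithBot ℕ))
    (b : Bd n (fun s => f s - p.eval s * Real.exp s)) :
    ∃ q : ℝ[X], q.degree < (K : WithBot ℕ) ∧ Bd n (fun s => Lop f s - q.eval s * Real.exp s) := by
  obtain ⟨q, hq, e⟩ := exists_q _ p hp
  refine ⟨derivative q, deg_deriv hq, ?_⟩
  have hr : LI (fun s => f s - p.eval s * Real.exp s) := hf.sub (LI_poly p)
  set r := fun s => f s - p.eval s * Real.exp s with hrdef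
  obtain ⟨c, hc, hb⟩ := pop_bound b
  have hv : LI (fun x => q.eval 0 - Pop r x) :=
    LI_of_cont (continuousOn_const.sub hr.pop_cont)
  have bv : Bd n (fun x => q.eval 0 - Pop r x) := by
    refine Bd_of_pt hv (|q.eval 0| + c) (by positivity) fun x hx => ?_
    have := abs_sub (q.eval 0) (Pop r x)
    linarith [const_bound n (q.eval 0) hx, hb x hx]
  refine (b.add hr hv bv).congr fun x hx => ?_
  have h1 : Pop r x = Pop f x - Pop (fun s => p.eval s * Real.exp s) x :=
    intervalIntegral.integral_sub (hf x hx) (LI_poly p x hx)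
  rw [h1, pop_poly p q e, hrdef, Lop, ← e]
  simp only [eval_add]
  ring

lemma f_formula {f : ℝ → ℝ} (hf : LI f) {x : ℝ} (hx : 0 ≤ x) :
    f x = Lop f x + Pop (Lop f) x +
      Real.exp x * ∫ s in (0:ℝ)..x, Real.exp (-s) * Pop (Lop f) s := by
  have hF := hf.pop_cont
  have hPF := (LI_of_cont hF).pop_cont
  have hP : ∀ y, 0 ≤ y → Pop (Lop f) y = Pop f y - Pop (Pop f) y := fun y hy =>
    intervalIntegral.integral_sub (hf y hy) (LI_of_cont hF y hy)
  have hI : (∫ s in (0:ℝ)..x, Real.exp (-s) * Pop (Lop f) s) = Real.exp (-x) * Pop (Pop f) x := by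
    rw [intervalIntegral.integral_eq_sub_of_hasDerivAt_of_le
      (f := fun s => Real.exp (-s) * Pop (Pop f) s) hx]
    · simp [Pop]
    · exact ContinuousOn.mul (by fun_prop) (hPF.mono Set.Icc_subset_Ici_self)
    · intro y hy
      have h1 : HasDerivAt (fun s => Real.exp (-s)) (Real.exp (-y) * (-1)) y :=
        (hasDerivAt_neg y).exp
      refine HasDerivAt.congr_deriv (h1.mul (pop_hasDeriv hF hy.1)) ?_
      rw [hP y hy.1.le]; ring
    · exact LI_of_cont (ContinuousOn.mul (by fun_prop) hf.lop.pop_cont) x hx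
  rw [hI, hP x hx, ← mul_assoc, ← Real.exp_add, Lop]
  simp

open Polynomial in
lemma bwd {K n : ℕ} {f : ℝ → ℝ} (hf : LI f) (p : ℝ[X]) (hp : p.degree < (K : WithBot ℕ))
    (b : Bd n (fun s => Lop f s - p.eval s * Real.exp s)) :
    ∃ q : ℝ[X], q.degree < ((K + 1 : ℕ) : WithBot ℕ) ∧
      Bd n (fun s => f s - q.eval s * Real.exp s) := by
  obtain ⟨q, hq, e⟩ := exists_q _ p hp
  obtain ⟨Q, hQ, eQ⟩ := exists_anti _ q hq
  have hr : LI (fun s => Lop f s - p.eval s * Real.exp s) := hf.lop.sub (LI_poly p)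
  set r := fun s => Lop f s - p.eval s * Real.exp s with hrdef
  obtain ⟨c, hc, hb⟩ := pop_bound b
  set u : ℝ → ℝ := fun x => Pop r x - q.eval 0 with hu
  have hPr : ∀ x, 0 ≤ x → Pop (Lop f) x = q.eval x * Real.exp x + u x := by
    intro x hx
    have h1 : Pop r x = Pop (Lop f) x - Pop (fun s => p.eval s * Real.exp s) x :=
      intervalIntegral.integral_sub (hf.lop x hx) (LI_poly p x hx)
    rw [pop_poly p q e] at h1
    simp only [hu]
    linarith
  have ucont : ContinuousOn u (Set.Ici 0) := hr.pop_cont.sub continuousOn_const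
  have ub : ∀ x, 0 ≤ x → |u x| ≤ (c + |q.eval 0|) * (x + 1) ^ n * Real.exp (x / 2) := by
    intro x hx
    have := abs_sub (Pop r x) (q.eval 0)
    simp only [hu]
    linarith [const_bound n (q.eval 0) hx, hb x hx]
  obtain ⟨A, C, hC, ht⟩ := tail_bound ucont _ (by positivity) ub
  have eucont : ContinuousOn (fun s => Real.exp (-s) * u s) (Set.Ici 0) :=
    ContinuousOn.mul (by fun_prop) ucont
  set v : ℝ → ℝ := fun x =>
    Real.exp x * (∫ s in (0:ℝ)..x, Real.exp (-s) * u s) - A * Real.exp x with hv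
  have vcont : ContinuousOn v (Set.Ici 0) := by
    have := (LI_of_cont eucont).pop_cont
    exact ContinuousOn.sub (ContinuousOn.mul (by fun_prop) this) (by fun_prop)
  have bu := Bd_of_pt (LI_of_cont ucont) _ (by positivity) ub
  have bv := Bd_of_pt (LI_of_cont vcont) _ hC ht
  refine ⟨p + q + Q + Polynomial.C (A - Q.eval 0), ?_, ?_⟩
  · rw [degree_lt_iff_coeff_zero] at hp hq hQ ⊢
    intro m hm
    have : m ≠ 0 := by omega
    simp [hp m (by omega), hq m (by omega), hQ m hm, coeff_C, this]
  · refine ((b.add hr (LI_of_cont ucont) bu).add (hr.add (LI_of_cont ucont))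
      (LI_of_cont vcont) bv).congr fun x hx => ?_
    have hI : (∫ s in (0:ℝ)..x, Real.exp (-s) * Pop (Lop f) s) =
        Q.eval x - Q.eval 0 + ∫ s in (0:ℝ)..x, Real.exp (-s) * u s := by
      have h2 : (∫ s in (0:ℝ)..x, q.eval s) = Q.eval x - Q.eval 0 := by
        apply intervalIntegral.integral_eq_sub_of_hasDerivAt
        · intro y _
          rw [← eQ]
          exact Q.hasDerivAt y
        · exact Continuous.intervalIntegrable (by fun_prop) _ _
      rw [← h2, ← intervalIntegral.integral_add
        (Continuous.intervalIntegrable (by fun_prop) _ _) (LI_of_cont eucont x hx)]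
      apply intervalIntegral.integral_congr
      intro y hy
      rw [Set.uIcc_of_le hx] at hy
      simp only [hPr y hy.1, mul_add]
      rw [mul_left_comm, ← Real.exp_add]
      simp
    rw [f_formula hf hx, hI, hPr x hx]
    simp only [hrdef, hv, eval_add, eval_C]
    ring

lemma step {K N : ℕ} {f : ℝ → ℝ} (hf : LI f) : MemFRw (K + 1) N f ↔ MemFRw K N (Lop f) := by
  constructor
  · rintro ⟨p, hp, b⟩
    exact fwd hf p hp b
  · rintro ⟨p, hp, b⟩
    exact bwd hf p hp b

lemma main_aux (K N : ℕ) : ∀ f : ℝ → ℝ, LI f → (MemFRw K N f ↔ MemFRw 0 N (Lop^[K] f)) := by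
  induction K with
  | zero => intro f _; simp
  | succ K ih =>
    intro f hf
    rw [step hf, ih _ hf.lop, Function.iterate_succ_apply]

/-- `f ∈ ℱ_w^{K,N}` if and only if `ℒ^K f ∈ ℛ_w^N = ℱ_w^{0,N}`. -/
theorem memFRw_iff_Lop_iterate_memRemainderW (K N : ℕ) (hN : 1 ≤ N) (f : ℝ → ℝ)
    (hf : LocallyIntegrableOn f (Set.Ici (0:ℝ))) :
    MemFRw K N f ↔ MemFRw 0 N (Lop^[K] f) := by
  refine main_aux K N f fun x hx => ?_
  rw [intervalIntegrable_iff_integrableOn_Icc_of_le hx]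
  exact hf.integrableOn_compact_subset Set.Icc_subset_Ici_self isCompact_Icc
end

section
/- Let K₁, K₂ ≥ 0 and N₁, N₂ ≥ 1 be integers. If f₁ ∈ ℱ^{K₁,N₁} and f₂ ∈ ℱ^{K₂,N₂}, then the convolution f₁ * f₂ belongs to ℱ^{K,N} with K = K₁ + K₂ and N = N₁ + N₂. -/
open MeasureTheory Real

/-- The convolution `f₁ * f₂(ℓ) = ∫₀^ℓ f₁(s) f₂(ℓ - s) ds`. -/
noncomputable def conv (f₁ f₂ : ℝ → ℝ) : ℝ → ℝ := fun ℓ => ∫ s in (0:ℝ)..ℓ, f₁ s * f₂ (ℓ - s)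


lemma fr_taylor (p : Polynomial ℝ) (K : ℕ) (hp : p.degree < (K : WithBot ℕ)) (x s : ℝ) :
    p.eval (x - s) = ∑ m ∈ Finset.range K, (Polynomial.hasseDeriv m p).eval (-s) * x ^ m := by
  rcases Nat.eq_zero_or_pos K with rfl | hK
  · have : p = 0 := by
      rw [← Polynomial.degree_eq_bot]
      simpa using hp
    simp [this]
  · have hn : p.natDegree < K := by
      by_cases h0 : p = 0
      · simpa [h0] using hK
      · exact (Polynomial.natDegree_lt_iff_degree_lt h0).2 hp
    have h := Polynomial.taylor_eval (-s) p x
    rw [sub_eq_add_neg, ← h, Polynomial.eval_eq_sum_range' (n := K)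
      (by rw [Polynomial.natDegree_taylor]; exact hn)]
    simp [Polynomial.taylor_coeff]

lemma fr_antideriv (q : Polynomial ℝ) (n : ℕ) (hq : q.natDegree ≤ n) :
    ∃ Q : Polynomial ℝ, Q.natDegree ≤ n + 1 ∧ ∀ x : ℝ, ∫ s in (0:ℝ)..x, q.eval s = Q.eval x := by
  refine ⟨∑ i ∈ Finset.range (n + 1), Polynomial.C (q.coeff i / (i + 1)) * Polynomial.X ^ (i + 1),
    ?_, ?_⟩
  · refine Polynomial.natDegree_sum_le_of_forall_le _ _ fun i hi => ?_
    refine (Polynomial.natDegree_C_mul_X_pow_le _ _).trans ?_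
    have := Finset.mem_range.1 hi
    omega
  · intro x
    simp_rw [Polynomial.eval_eq_sum_range' (Nat.lt_succ_of_le hq)]
    rw [intervalIntegral.integral_finsetSum
      (fun i _ => Continuous.intervalIntegrable (by fun_prop) _ _), Polynomial.eval_finsetSum]
    refine Finset.sum_congr rfl fun i _ => ?_
    rw [intervalIntegral.integral_const_mul, integral_pow]
    simp
    ring

lemma fr_poly_conv (p₁ p₂ : Polynomial ℝ) (K₁ K₂ : ℕ) (h₁ : p₁.degree < (K₁ : WithBot ℕ))
    (h₂ : p₂.degree < (K₂ : WithBot ℕ)) :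
    ∃ q : Polynomial ℝ, q.degree < ((K₁ + K₂ : ℕ) : WithBot ℕ) ∧
      ∀ x : ℝ, ∫ s in (0:ℝ)..x, p₁.eval s * p₂.eval (x - s) = q.eval x := by
  by_cases h0 : p₁ = 0
  · exact ⟨0, by simpa using WithBot.bot_lt_coe (K₁ + K₂), by simp [h0]⟩
  have hn₁ := (Polynomial.natDegree_lt_iff_degree_lt h0).2 h₁
  by_cases h0' : p₂ = 0
  · exact ⟨0, by simpa using WithBot.bot_lt_coe (K₁ + K₂), by simp [h0']⟩
  have hn₂ := (Polynomial.natDegree_lt_iff_degree_lt h0').2 h₂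
  have key : ∀ m : ℕ, ∃ Q : Polynomial ℝ, Q.natDegree ≤ (K₁ - 1 + (K₂ - 1 - m)) + 1 ∧
      ∀ x : ℝ, ∫ s in (0:ℝ)..x,
        (p₁ * (Polynomial.hasseDeriv m p₂).comp (-Polynomial.X)).eval s = Q.eval x := by
    intro m
    apply fr_antideriv
    refine Polynomial.natDegree_mul_le.trans ?_
    have a1 := Polynomial.natDegree_hasseDeriv_le p₂ m
    have a2 : ((Polynomial.hasseDeriv m p₂).comp (-Polynomial.X)).natDegree
        ≤ (Polynomial.hasseDeriv m p₂).natDegree := by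
      refine Polynomial.natDegree_comp_le.trans ?_
      simp
    omega
  choose Q hQ hQ' using key
  refine ⟨∑ m ∈ Finset.range K₂, Q m * Polynomial.X ^ m, ?_, ?_⟩
  · have : (∑ m ∈ Finset.range K₂, Q m * Polynomial.X ^ m).natDegree ≤ K₁ + K₂ - 1 := by
      refine Polynomial.natDegree_sum_le_of_forall_le _ _ fun i hi => ?_
      refine Polynomial.natDegree_mul_le.trans ?_
      have := Finset.mem_range.1 hi
      have := hQ i
      rw [Polynomial.natDegree_X_pow]
      omega
    refine lt_of_le_of_lt Polynomial.degree_le_natDegree ?_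
    exact_mod_cast (by omega : _ < K₁ + K₂)
  · intro x
    simp_rw [fr_taylor p₂ K₂ h₂, Finset.mul_sum]
    rw [intervalIntegral.integral_finsetSum
      (fun i _ => Continuous.intervalIntegrable (by fun_prop) _ _), Polynomial.eval_finsetSum]
    refine Finset.sum_congr rfl fun i _ => ?_
    simp_rw [← mul_assoc]
    rw [intervalIntegral.integral_mul_const]
    simp [← hQ']

lemma fr_poly_exp_int (p : Polynomial ℝ) :
    IntegrableOn (fun u : ℝ => p.eval u * Real.exp (-u / 2)) (Set.Ioi 0) := by
  refine integrable_of_isBigO_exp_neg (b := 1/4) (by norm_num)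
    (Continuous.continuousOn (by fun_prop)) ?_
  have h : (fun u : ℝ => p.eval u) =O[Filter.atTop] fun u => Real.exp (1/4 * u) := by
    have : (fun u : ℝ => p.eval u)
        = fun u => ∑ i ∈ Finset.range (p.natDegree + 1), p.coeff i * u ^ i := by
      ext u; exact Polynomial.eval_eq_sum_range u
    rw [this]
    refine Asymptotics.IsBigO.fun_sum fun i _ => ?_
    exact ((isLittleO_pow_exp_pos_mul_atTop i (by norm_num)).isBigO).const_mul_left _
  refine (h.mul (Asymptotics.isBigO_refl (fun u : ℝ => Real.exp (-u/2)) _)).congr_right ?_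
  intro u
  rw [← Real.exp_add]; congr 1; ring

lemma fr_mixed (r : ℝ → ℝ) (hr : LocallyIntegrableOn r (Set.Ici (0:ℝ))) (c : ℝ)
    (hc : 0 ≤ c) (n : ℕ)
    (hb : ∀ s : ℝ, 0 ≤ s → |r s| ≤ c * (s + 1) ^ n * Real.exp (s / 2))
    (p : Polynomial ℝ) (K : ℕ) (hp : p.degree < (K : WithBot ℕ)) :
    ∃ q : Polynomial ℝ, q.degree < (K : WithBot ℕ) ∧ ∃ C : ℝ, 0 ≤ C ∧ ∀ x : ℝ, 0 ≤ x →
      |(∫ s in (0:ℝ)..x, r s * (p.eval (x - s) * Real.exp (x - s))) - q.eval x * Real.exp x|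
        ≤ C * (x + 1) ^ n * Real.exp (x / 2) := by
  have hmeas : AEStronglyMeasurable r (volume.restrict (Set.Ioi 0)) :=
    (hr.mono_set Set.Ioi_subset_Ici_self).aestronglyMeasurable
  have hint : ∀ h : Polynomial ℝ,
      IntegrableOn (fun s => r s * Real.exp (-s) * h.eval s) (Set.Ioi 0) := by
    intro h
    have hd := ((fr_poly_exp_int (Polynomial.C c * (Polynomial.X + 1) ^ n * h)).norm)
    refine Integrable.mono' hd ?_ ?_
    · exact (hmeas.mul (Continuous.aestronglyMeasurable (by fun_prop))).mul
        (Continuous.aestronglyMeasurable (by fun_prop))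
    · refine (ae_restrict_mem measurableSet_Ioi).mono fun s hs => ?_
      have hs : 0 < s := hs
      have h1 := hb s hs.le
      have e : Real.exp (s/2) * Real.exp (-s) = Real.exp (-s/2) := by
        rw [← Real.exp_add]; congr 1; ring
      simp only [Polynomial.eval_mul, Polynomial.eval_pow, Polynomial.eval_add, Polynomial.eval_C,
        Polynomial.eval_X, Polynomial.eval_one, Real.norm_eq_abs, abs_mul, abs_pow, Real.abs_exp]
      rw [← e, abs_of_nonneg hc, abs_of_nonneg (by linarith : 0 ≤ s + 1)]
      calc |r s| * Real.exp (-s) * |h.eval s|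
          ≤ (c * (s + 1) ^ n * Real.exp (s / 2)) * Real.exp (-s) * |h.eval s| := by gcongr
        _ = _ := by ring
  set H : ℕ → Polynomial ℝ := fun m => (Polynomial.hasseDeriv m p).comp (-Polynomial.X) with hH
  have hexp : ∀ x s : ℝ, p.eval (x - s) = ∑ m ∈ Finset.range K, (H m).eval s * x ^ m := by
    intro x s
    rw [fr_taylor p K hp]
    simp [hH]
  have hint2 : ∀ x : ℝ, IntegrableOn (fun s => r s * Real.exp (-s) * p.eval (x - s))
      (Set.Ioi 0) := by
    intro x
    have := hint (p.comp (Polynomial.C x - Polynomial.X))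
    simpa using this
  set q : Polynomial ℝ := ∑ m ∈ Finset.range K,
    Polynomial.C (∫ s in Set.Ioi (0:ℝ), r s * Real.exp (-s) * (H m).eval s) * Polynomial.X ^ m
    with hq
  have hqe : ∀ x : ℝ, q.eval x = ∫ s in Set.Ioi (0:ℝ), r s * Real.exp (-s) * p.eval (x - s) := by
    intro x
    simp_rw [hexp, Finset.mul_sum, ← mul_assoc]
    rw [integral_finsetSum _ (fun i _ => (hint (H i)).mul_const _), hq,
      Polynomial.eval_finsetSum]
    refine Finset.sum_congr rfl fun i _ => ?_
    rw [integral_mul_const]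
    simp
  set G : ℝ → ℝ := fun u =>
    |((Polynomial.X + 1) ^ n * p.comp (-Polynomial.X)).eval u * Real.exp (-u/2)| with hG
  have hGi : IntegrableOn G (Set.Ioi 0) :=
    (fr_poly_exp_int ((Polynomial.X + 1) ^ n * p.comp (-Polynomial.X))).norm
  refine ⟨q, ?_, c * ∫ u in Set.Ioi (0:ℝ), G u, ?_, ?_⟩
  · rw [← Polynomial.mem_degreeLT]
    refine Submodule.sum_mem _ fun i hi => ?_
    rw [Polynomial.mem_degreeLT]
    refine lt_of_le_of_lt (Polynomial.degree_C_mul_X_pow_le _ _) ?_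
    exact_mod_cast Finset.mem_range.1 hi
  · exact mul_nonneg hc (integral_nonneg fun u => abs_nonneg _)
  intro x hx
  have e1 : (∫ s in (0:ℝ)..x, r s * (p.eval (x - s) * Real.exp (x - s)))
      = (∫ s in (0:ℝ)..x, r s * Real.exp (-s) * p.eval (x - s)) * Real.exp x := by
    rw [← intervalIntegral.integral_mul_const]
    congr 1; ext s
    rw [sub_eq_add_neg x s, Real.exp_add]; ring
  have hsub : IntegrableOn (fun s => r s * Real.exp (-s) * p.eval (x - s)) (Set.Ioi x) :=
    (hint2 x).mono_set (Set.Ioi_subset_Ioi hx)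
  have e2 := intervalIntegral.integral_interval_add_Ioi (hint2 x) hsub
  rw [e1, hqe, ← e2, ← sub_mul, sub_add_cancel_left, abs_mul, abs_neg, Real.abs_exp]
  have mp := measurePreserving_sub_right (volume : Measure ℝ) x
  have me : MeasurableEmbedding (fun s : ℝ => s - x) := (MeasurableEquiv.subRight x).measurableEmbedding
  have pre : (fun s : ℝ => s - x) ⁻¹' Set.Ioi 0 = Set.Ioi x := by ext s; simp
  have s1 : ∫ s in Set.Ioi x, G (s - x) = ∫ u in Set.Ioi (0:ℝ), G u := by
    rw [← pre]; exact mp.setIntegral_preimage_emb me G _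
  have s2 : IntegrableOn (fun s => G (s - x)) (Set.Ioi x) := by
    rw [← pre]; exact (mp.integrableOn_comp_preimage me).2 hGi
  have b : |∫ s in Set.Ioi x, r s * Real.exp (-s) * p.eval (x - s)|
      ≤ ∫ s in Set.Ioi x, c * (x + 1) ^ n * Real.exp (-x/2) * G (s - x) := by
    rw [← Real.norm_eq_abs]
    refine norm_integral_le_of_norm_le (s2.const_mul _) ?_
    refine (ae_restrict_mem measurableSet_Ioi).mono fun s hs => ?_
    have hs : x < s := hs
    have h1 := hb s (by linarith)
    have e : Real.exp (s/2) * Real.exp (-s) = Real.exp (-x/2) * Real.exp (-(s-x)/2) := by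
      rw [← Real.exp_add, ← Real.exp_add]; congr 1; ring
    have h2 : (s + 1) ^ n ≤ (x + 1) ^ n * (s - x + 1) ^ n := by
      rw [← mul_pow]
      apply pow_le_pow_left₀ (by linarith)
      nlinarith [mul_nonneg hx (sub_nonneg.2 hs.le)]
    simp only [hG, Polynomial.eval_mul, Polynomial.eval_pow, Polynomial.eval_add,
        Polynomial.eval_comp, Polynomial.eval_neg, neg_sub,
        Polynomial.eval_X, Polynomial.eval_one, Real.norm_eq_abs, abs_mul, abs_pow, Real.abs_exp]
    rw [abs_of_nonneg (by linarith : 0 ≤ s - x + 1)]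
    calc |r s| * Real.exp (-s) * |p.eval (x - s)|
        ≤ (c * ((x + 1) ^ n * (s - x + 1) ^ n) * Real.exp (s / 2)) * Real.exp (-s)
            * |p.eval (x - s)| := by
          gcongr
          exact h1.trans (by gcongr)
      _ = c * ((x + 1) ^ n * (s - x + 1) ^ n) * (Real.exp (s / 2) * Real.exp (-s))
            * |p.eval (x - s)| := by ring
      _ = _ := by rw [e, neg_sub]; ring
  rw [integral_const_mul, s1] at b
  have e3 : Real.exp (-x/2) * Real.exp x = Real.exp (x/2) := by
    rw [← Real.exp_add]; congr 1; ring
  calc _ ≤ (c * (x + 1) ^ n * Real.exp (-x/2) * ∫ u in Set.Ioi (0:ℝ), G u) * Real.exp x := by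
        gcongr
    _ = _ := by rw [← e3]; ring

lemma fr_comm (f g : ℝ → ℝ) (x : ℝ) :
    ∫ s in (0:ℝ)..x, f s * g (x - s) = ∫ s in (0:ℝ)..x, g s * f (x - s) := by
  have := intervalIntegral.integral_comp_sub_left (a := 0) (b := x)
    (fun s => g s * f (x - s)) x
  simp only [sub_sub_cancel, sub_self, sub_zero] at this
  rw [← this]
  congr 1; ext s; ring

lemma fr_ii (f : ℝ → ℝ) (hf : LocallyIntegrableOn f (Set.Ici (0:ℝ))) (x : ℝ) (hx : 0 ≤ x) :
    IntervalIntegrable f volume 0 x := by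
  rw [intervalIntegrable_iff_integrableOn_Icc_of_le hx]
  exact hf.integrableOn_compact_subset Set.Icc_subset_Ici_self isCompact_Icc

lemma fr_ii' (f : ℝ → ℝ) (hf : LocallyIntegrableOn f (Set.Ici (0:ℝ))) (x : ℝ) (hx : 0 ≤ x) :
    IntervalIntegrable (fun s => f (x - s)) volume 0 x := by
  have := (fr_ii f hf x hx).comp_sub_left x
  simpa using this.symm

theorem memFR_conv (K₁ K₂ N₁ N₂ : ℕ) (hN₁ : 1 ≤ N₁) (hN₂ : 1 ≤ N₂) (f₁ f₂ : ℝ → ℝ)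
    (hf₁ : LocallyIntegrableOn f₁ (Set.Ici (0:ℝ)))
    (hf₂ : LocallyIntegrableOn f₂ (Set.Ici (0:ℝ)))
    (h₁ : MemFR K₁ N₁ f₁) (h₂ : MemFR K₂ N₂ f₂) :
    MemFR (K₁ + K₂) (N₁ + N₂) (conv f₁ f₂) := by
  obtain ⟨p₁, hp₁, c₁, hc₁, hb₁⟩ := h₁
  obtain ⟨p₂, hp₂, c₂, hc₂, hb₂⟩ := h₂
  obtain ⟨r₁, hr₁⟩ : ∃ r : ℝ → ℝ, r = fun s => f₁ s - p₁.eval s * Real.exp s := ⟨_, rfl⟩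
  obtain ⟨r₂, hr₂⟩ : ∃ r : ℝ → ℝ, r = fun s => f₂ s - p₂.eval s * Real.exp s := ⟨_, rfl⟩
  have hl₁ : LocallyIntegrableOn r₁ (Set.Ici (0:ℝ)) := by
    rw [hr₁]
    exact hf₁.sub ((Continuous.locallyIntegrable (by fun_prop)).locallyIntegrableOn _)
  have hl₂ : LocallyIntegrableOn r₂ (Set.Ici (0:ℝ)) := by
    rw [hr₂]
    exact hf₂.sub ((Continuous.locallyIntegrable (by fun_prop)).locallyIntegrableOn _)
  have hb₁' : ∀ s : ℝ, 0 ≤ s → |r₁ s| ≤ c₁ * (s + 1) ^ (N₁ - 1) * Real.exp (s / 2) := by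
    rw [hr₁]; exact hb₁
  have hb₂' : ∀ s : ℝ, 0 ≤ s → |r₂ s| ≤ c₂ * (s + 1) ^ (N₂ - 1) * Real.exp (s / 2) := by
    rw [hr₂]; exact hb₂
  have hf₁' : ∀ s, f₁ s = r₁ s + p₁.eval s * Real.exp s := by intro s; simp [hr₁]
  have hf₂' : ∀ s, f₂ s = r₂ s + p₂.eval s * Real.exp s := by intro s; simp [hr₂]
  obtain ⟨q, hq, hqe⟩ := fr_poly_conv p₁ p₂ K₁ K₂ hp₁ hp₂
  obtain ⟨q₁, hq₁, C₁, hC₁, hqe₁⟩ := fr_mixed r₁ hl₁ c₁ hc₁ _ hb₁' p₂ K₂ hp₂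
  obtain ⟨q₂, hq₂, C₂, hC₂, hqe₂⟩ := fr_mixed r₂ hl₂ c₂ hc₂ _ hb₂' p₁ K₁ hp₁
  refine ⟨q + q₁ + q₂, ?_, c₁ * c₂ + C₁ + C₂, by positivity, ?_⟩
  · rw [← Polynomial.mem_degreeLT]
    refine Submodule.add_mem _ (Submodule.add_mem _ ?_ ?_) ?_ <;> rw [Polynomial.mem_degreeLT]
    · exact hq
    · exact hq₁.trans_le (by exact_mod_cast Nat.le_add_left _ _)
    · exact hq₂.trans_le (by exact_mod_cast Nat.le_add_right _ _)
  intro x hx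
  have bnd : ∀ s ∈ Set.Icc 0 x, |r₁ s * r₂ (x - s)|
      ≤ c₁ * c₂ * (x + 1) ^ (N₁ + N₂ - 2) * Real.exp (x / 2) := by
    intro s hs
    have a1 := hb₁' s hs.1
    have a2 := hb₂' (x - s) (sub_nonneg.2 hs.2)
    have e : Real.exp (s/2) * Real.exp ((x - s)/2) = Real.exp (x/2) := by
      rw [← Real.exp_add]; congr 1; ring
    have i1 : s + 1 ≤ x + 1 := by linarith [hs.2]
    have i2 : x - s + 1 ≤ x + 1 := by linarith [hs.1]
    have i3 : 0 ≤ s + 1 := by linarith [hs.1]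
    have i4 : 0 ≤ x - s + 1 := by linarith [hs.2]
    have e' : N₁ + N₂ - 2 = (N₁ - 1) + (N₂ - 1) := by omega
    rw [abs_mul, e', pow_add, ← e]
    calc |r₁ s| * |r₂ (x - s)| ≤ (c₁ * (x + 1) ^ (N₁ - 1) * Real.exp (s / 2)) *
          (c₂ * (x + 1) ^ (N₂ - 1) * Real.exp ((x - s) / 2)) := by
          refine mul_le_mul (a1.trans (by gcongr)) (a2.trans (by gcongr)) (abs_nonneg _) ?_
          positivity
      _ = _ := by ring
  have m1 := fr_ii r₁ hl₁ x hx
  have m2 := fr_ii' r₂ hl₂ x hx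
  have i11 : IntervalIntegrable (fun s => r₁ s * r₂ (x - s)) volume 0 x := by
    rw [intervalIntegrable_iff_integrableOn_Ioc_of_le hx] at m1 m2 ⊢
    refine Integrable.mono' (g := fun _ => c₁ * c₂ * (x + 1) ^ (N₁ + N₂ - 2) * Real.exp (x / 2))
      (integrable_const _) (m1.aestronglyMeasurable.mul m2.aestronglyMeasurable) ?_
    exact (ae_restrict_mem measurableSet_Ioc).mono fun s hs => bnd s ⟨hs.1.le, hs.2⟩
  have i12 : IntervalIntegrable (fun s => r₁ s * (p₂.eval (x - s) * Real.exp (x - s)))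
      volume 0 x := m1.mul_continuousOn (Continuous.continuousOn (by fun_prop))
  have i21 : IntervalIntegrable (fun s => (p₁.eval s * Real.exp s) * r₂ (x - s))
      volume 0 x := m2.continuousOn_mul (Continuous.continuousOn (by fun_prop))
  have i22 : IntervalIntegrable
      (fun s => (p₁.eval s * Real.exp s) * (p₂.eval (x - s) * Real.exp (x - s))) volume 0 x :=
    Continuous.intervalIntegrable (by fun_prop) _ _
  have split : conv f₁ f₂ x = (∫ s in (0:ℝ)..x, r₁ s * r₂ (x - s))
      + (∫ s in (0:ℝ)..x, r₁ s * (p₂.eval (x - s) * Real.exp (x - s)))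
      + (∫ s in (0:ℝ)..x, (p₁.eval s * Real.exp s) * r₂ (x - s))
      + ∫ s in (0:ℝ)..x, (p₁.eval s * Real.exp s) * (p₂.eval (x - s) * Real.exp (x - s)) := by
    rw [← intervalIntegral.integral_add i11 i12, ← intervalIntegral.integral_add (i11.add i12) i21,
      ← intervalIntegral.integral_add ((i11.add i12).add i21) i22]
    unfold conv
    congr 1; ext s
    rw [hf₁' s, hf₂' (x - s)]
    ring
  have t22 : (∫ s in (0:ℝ)..x, (p₁.eval s * Real.exp s) * (p₂.eval (x - s) * Real.exp (x - s)))
      = q.eval x * Real.exp x := by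
    rw [← hqe, ← intervalIntegral.integral_mul_const]
    congr 1; ext s
    have e : Real.exp s * Real.exp (x - s) = Real.exp x := by
      rw [← Real.exp_add]; congr 1; ring
    rw [← e]; ring
  have t21 := fr_comm (fun s => p₁.eval s * Real.exp s) r₂ x
  have t11 : |∫ s in (0:ℝ)..x, r₁ s * r₂ (x - s)|
      ≤ c₁ * c₂ * (x + 1) ^ (N₁ + N₂ - 1) * Real.exp (x / 2) := by
    have := intervalIntegral.norm_integral_le_of_norm_le_const (a := 0) (b := x)
      (f := fun s => r₁ s * r₂ (x - s))
      (C := c₁ * c₂ * (x + 1) ^ (N₁ + N₂ - 2) * Real.exp (x / 2)) (by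
        intro s hs
        rw [Set.uIoc_of_le hx] at hs
        exact bnd s ⟨hs.1.le, hs.2⟩)
    rw [Real.norm_eq_abs, sub_zero, abs_of_nonneg hx] at this
    refine this.trans ?_
    have e' : N₁ + N₂ - 1 = (N₁ + N₂ - 2) + 1 := by omega
    rw [e', pow_succ]
    calc _ ≤ c₁ * c₂ * (x + 1) ^ (N₁ + N₂ - 2) * Real.exp (x / 2) * (x + 1) := by
          gcongr; linarith
      _ = _ := by ring
  have t1 := hqe₁ x hx
  have t2 := hqe₂ x hx
  have g1 : C₁ * (x + 1) ^ (N₁ - 1) * Real.exp (x / 2)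
      ≤ C₁ * (x + 1) ^ (N₁ + N₂ - 1) * Real.exp (x / 2) := by
    gcongr
    · linarith
    · omega
  have g2 : C₂ * (x + 1) ^ (N₂ - 1) * Real.exp (x / 2)
      ≤ C₂ * (x + 1) ^ (N₁ + N₂ - 1) * Real.exp (x / 2) := by
    gcongr
    · linarith
    · omega
  rw [split, t22, t21]
  simp only [Polynomial.eval_add]
  rw [abs_le] at *
  constructor <;> linarith [t11.1, t11.2, t1.1, t1.2, t2.1, t2.2]
end

section
/- Let K ≥ 0 and N ≥ 1 be integers. If f : [0,∞) → ℝ is locally integrable and f ∈ ℱ^{K,N}, then 𝒫f ∈ ℱ^{K,N} and ℒf ∈ ℱ^{K,N}. -/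
open MeasureTheory Real

lemma exists_poly_prim (K : ℕ) : ∀ p : Polynomial ℝ, p.degree < (K : WithBot ℕ) →
    ∃ q : Polynomial ℝ, q.degree < (K : WithBot ℕ) ∧ q + Polynomial.derivative q = p := by
  induction K with
  | zero =>
    intro p hp
    have : p = 0 := by
      rw [← Polynomial.degree_eq_bot]
      simpa using hp
    exact ⟨0, by simp, by simp [this]⟩
  | succ K ih =>
    intro p hp
    have hd : (Polynomial.derivative p).degree < (K : WithBot ℕ) := by
      rw [Polynomial.degree_lt_iff_coeff_zero] at hp ⊢
      intro m hm
      rw [Polynomial.coeff_derivative, hp (m + 1) (by omega), zero_mul]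
    obtain ⟨r, hr, hr2⟩ := ih _ hd
    refine ⟨p - r, ?_, ?_⟩
    · refine lt_of_le_of_lt (Polynomial.degree_sub_le p r) (max_lt hp (hr.trans ?_))
      exact_mod_cast Nat.lt_succ_self K
    · rw [Polynomial.derivative_sub, ← hr2]; ring

lemma MemFR_sub {K N : ℕ} {f g : ℝ → ℝ} (hf : MemFR K N f) (hg : MemFR K N g) :
    MemFR K N (fun x => f x - g x) := by
  obtain ⟨p, hp, c, hc, h⟩ := hf
  obtain ⟨q, hq, d, hd, h'⟩ := hg
  refine ⟨p - q, lt_of_le_of_lt (Polynomial.degree_sub_le p q) (max_lt hp hq), c + d,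
    add_nonneg hc hd, fun x hx => ?_⟩
  have e : f x - g x - Polynomial.eval x (p - q) * Real.exp x =
      (f x - Polynomial.eval x p * Real.exp x) - (g x - Polynomial.eval x q * Real.exp x) := by
    rw [Polynomial.eval_sub]; ring
  rw [e]
  refine (abs_sub _ _).trans ?_
  have := h x hx
  have := h' x hx
  linarith

lemma MemFR_Pop (K N : ℕ) (f : ℝ → ℝ)
    (hf : LocallyIntegrableOn f (Set.Ici (0:ℝ))) (h : MemFR K N f) :
    MemFR K N (Pop f) := by
  obtain ⟨p, hp, c, hc, h⟩ := h
  obtain ⟨q, hq, hqp⟩ := exists_poly_prim K p hp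
  refine ⟨q, hq, 2 * c + |q.eval 0|, by positivity, fun x hx => ?_⟩
  have hfi : IntervalIntegrable f volume 0 x := by
    rw [intervalIntegrable_iff_integrableOn_Icc_of_le hx]
    exact hf.integrableOn_compact_subset Set.Icc_subset_Ici_self isCompact_Icc
  have hpi : IntervalIntegrable (fun s => p.eval s * Real.exp s) volume 0 x :=
    (p.continuous.mul Real.continuous_exp).intervalIntegrable _ _
  have hprim : ∫ s in (0:ℝ)..x, p.eval s * Real.exp s = q.eval x * Real.exp x - q.eval 0 := by
    rw [intervalIntegral.integral_eq_sub_of_hasDerivAt (f := fun s => q.eval s * Real.exp s)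
      _ hpi]
    · simp
    · intro s _
      have := (q.hasDerivAt s).mul (Real.hasDerivAt_exp s)
      have e : p.eval s * Real.exp s =
          (Polynomial.derivative q).eval s * Real.exp s + q.eval s * Real.exp s := by
        rw [← hqp, Polynomial.eval_add]; ring
      rw [e]
      exact this
  have hexp : ∫ s in (0:ℝ)..x, c * (x + 1) ^ (N - 1) * Real.exp (s / 2) =
      c * (x + 1) ^ (N - 1) * (2 * Real.exp (x / 2) - 2) := by
    rw [intervalIntegral.integral_const_mul]
    simp
    ring_nf
    simp
  have hb : |∫ s in (0:ℝ)..x, (f s - p.eval s * Real.exp s)| ≤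
      c * (x + 1) ^ (N - 1) * (2 * Real.exp (x / 2) - 2) := by
    rw [← hexp, ← Real.norm_eq_abs]
    refine intervalIntegral.norm_integral_le_of_norm_le hx ?_ ?_
    · refine Filter.Eventually.of_forall fun s hs => ?_
      refine (h s hs.1.le).trans ?_
      have h0 : 0 ≤ s + 1 := by linarith [hs.1]
      have h1 : s + 1 ≤ x + 1 := by linarith [hs.2]
      gcongr
    · exact Continuous.intervalIntegrable (by fun_prop) _ _
  rw [intervalIntegral.integral_sub hfi hpi, hprim] at hb
  have e : Pop f x - q.eval x * Real.exp x =
      ((∫ s in (0:ℝ)..x, f s) - (q.eval x * Real.exp x - q.eval 0)) - q.eval 0 := by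
    unfold Pop; ring
  rw [e]
  refine (abs_sub _ _).trans ?_
  have h1 : 1 ≤ (x + 1) ^ (N - 1) := one_le_pow₀ (by linarith)
  have h2 : 1 ≤ Real.exp (x / 2) := Real.one_le_exp (by positivity)
  have h3 : |q.eval 0| ≤ |q.eval 0| * ((x + 1) ^ (N - 1) * Real.exp (x / 2)) :=
    le_mul_of_one_le_right (abs_nonneg _) (one_le_mul_of_one_le_of_one_le h1 h2)
  have h4 : 0 ≤ c * (x + 1) ^ (N - 1) := by positivity
  nlinarith

/-- The operators `𝒫` and `ℒ` preserve the class `ℱ^{K,N}`. -/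
theorem Pop_Lop_preserve_FR (K N : ℕ) (hN : 1 ≤ N) (f : ℝ → ℝ)
    (hf : LocallyIntegrableOn f (Set.Ici (0:ℝ))) (h : MemFR K N f) :
    MemFR K N (Pop f) ∧ MemFR K N (Lop f) :=
  ⟨MemFR_Pop K N f hf h, MemFR_sub h (MemFR_Pop K N f hf h)⟩
end

section
/- Let a > 0, n ≥ 1, and let g : [a,∞)^n → ℝ be C^∞. Suppose that for every multi-index α ∈ {0,1}^n with α ≠ (0,…,0), one has sup_{x ∈ [a,∞)^n} e^{α·x} |∂^α g(x)| < ∞, where ∂^α denotes the partial derivative ∏_{i : αᵢ = 1} ∂/∂xᵢ and α·x = ∑ᵢ αᵢ xᵢ. Then g is bounded on [a,∞)^n. -/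
open Real

/-- The partial derivative `∂/∂xᵢ` within a set `B`. -/
noncomputable def pdW {n : ℕ} (B : Set (Fin n → ℝ)) (i : Fin n)
    (g : (Fin n → ℝ) → ℝ) : (Fin n → ℝ) → ℝ :=
  fun x => fderivWithin ℝ g B x (Pi.single i 1)

/-- The iterated partial derivative `∂^α = ∏_{i ∈ S} ∂/∂xᵢ` (for a multi-index
`α ∈ {0,1}^n` with support `S`), within a set `B`, taken in increasing order of indices. -/
noncomputable def pdMultiW {n : ℕ} (B : Set (Fin n → ℝ)) (S : Finset (Fin n))
    (g : (Fin n → ℝ) → ℝ) : (Fin n → ℝ) → ℝ :=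
  (S.sort (· ≤ ·)).foldr (pdW B) g

/-- If `g` is `C^∞` on the box `[a,∞)ⁿ` and every partial derivative `∂^α g`, for a multi-index
`α ∈ {0,1}ⁿ`, `α ≠ 0`, satisfies `sup_{x ∈ [a,∞)ⁿ} e^{α·x}|∂^α g(x)| < ∞`, then `g` is bounded
on `[a,∞)ⁿ`. -/
theorem bounded_of_exp_decay_derivs (n : ℕ) (hn : 1 ≤ n) (a : ℝ) (ha : 0 < a)
    (g : (Fin n → ℝ) → ℝ)
    (hg : ContDiffOn ℝ (⊤ : ℕ∞) g {x : Fin n → ℝ | ∀ i, a ≤ x i})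
    (hbd : ∀ S : Finset (Fin n), S.Nonempty →
      ∃ C : ℝ, ∀ x : Fin n → ℝ, (∀ i, a ≤ x i) →
        Real.exp (∑ i ∈ S, x i) *
          |pdMultiW {y : Fin n → ℝ | ∀ i, a ≤ y i} S g x| ≤ C) :
    ∃ C : ℝ, ∀ x : Fin n → ℝ, (∀ i, a ≤ x i) → |g x| ≤ C := by
  classical
  have hdiff : DifferentiableOn ℝ g {x : Fin n → ℝ | ∀ i, a ≤ x i} :=
    hg.differentiableOn (by simp)
  have key : ∀ i : Fin n, ∃ C : ℝ, ∀ x : Fin n → ℝ, (∀ i, a ≤ x i) →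
      |g x| ≤ |g (Function.update x i a)| + C := by
    intro i
    obtain ⟨C, hC⟩ := hbd {i} (Finset.singleton_nonempty i)
    have hC' : ∀ x : Fin n → ℝ, (∀ i, a ≤ x i) →
        |fderivWithin ℝ g {y : Fin n → ℝ | ∀ i, a ≤ y i} x (Pi.single i 1)|
          ≤ C * Real.exp (-(x i)) := by
      intro x hx
      have h := hC x hx
      simp only [pdMultiW, Finset.sort_singleton, List.foldr, pdW, Finset.sum_singleton] at h
      rw [Real.exp_neg, ← div_eq_mul_inv, le_div_iff₀ (Real.exp_pos _)]
      linarith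
    have hC0 : 0 ≤ C := by
      refine le_trans ?_ (hC (fun _ => a) (fun _ => le_rfl))
      positivity
    refine ⟨C * Real.exp (-a), fun x hx => ?_⟩
    have hmem : ∀ t, a ≤ t → ∀ j, a ≤ Function.update x i t j := by
      intro t ht j
      by_cases h : j = i
      · subst h; simpa using ht
      · simpa [Function.update_of_ne h] using hx j
    have hd : ∀ t, a ≤ t → HasDerivWithinAt (fun t => g (Function.update x i t))
        (fderivWithin ℝ g {y : Fin n → ℝ | ∀ i, a ≤ y i} (Function.update x i t)
          (Pi.single i 1)) (Set.Ici a) t := by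
      intro t ht
      exact (hdiff _ (hmem t ht)).hasFDerivWithinAt.comp_hasDerivWithinAt t
        (hasDerivAt_update x i t).hasDerivWithinAt (fun s hs => hmem s hs)
    have hB : ∀ t : ℝ, HasDerivAt (fun t => |g (Function.update x i a)| +
        C * (Real.exp (-a) - Real.exp (-t))) (C * Real.exp (-t)) t := by
      intro t
      have h := ((((hasDerivAt_neg t).exp).const_sub (Real.exp (-a))).const_mul C).const_add
        |g (Function.update x i a)|
      exact h.congr_deriv (by ring)
    have := image_norm_le_of_norm_deriv_right_le_deriv_boundary (a := a) (b := x i)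
      (f := fun t => g (Function.update x i t))
      (fun t ht => ((hd t ht.1).mono Set.Icc_subset_Ici_self).continuousWithinAt)
      (fun t ht => (hd t ht.1).mono (Set.Ici_subset_Ici.2 ht.1))
      (by simp) hB
      (fun t ht => by simpa using hC' _ (hmem t ht.1))
      (Set.right_mem_Icc.2 (hx i))
    simp only [Function.update_eq_self, Real.norm_eq_abs] at this
    nlinarith [Real.exp_pos (-(x i))]
  have ind : ∀ s : Finset (Fin n), ∃ C : ℝ, ∀ x : Fin n → ℝ, (∀ i, a ≤ x i) →
      (∀ i ∉ s, x i = a) → |g x| ≤ C := by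
    intro s
    induction s using Finset.induction_on with
    | empty =>
      refine ⟨|g (fun _ => a)|, fun x _ h => ?_⟩
      have : x = fun _ => a := funext fun i => h i (by simp)
      rw [this]
    | insert i s hi ih =>
      obtain ⟨C, hC⟩ := ih
      obtain ⟨D, hD⟩ := key i
      refine ⟨C + D, fun x hx h => ?_⟩
      have h1 := hD x hx
      have h2 := hC (Function.update x i a) (fun j => by
        by_cases h : j = i
        · subst h; simp
        · simpa [Function.update_of_ne h] using hx j) (fun j hj => by
        by_cases hji : j = i
        · subst hji; simp
        · rw [Function.update_of_ne hji]; exact h j (by simp [hji, hj]))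
      linarith
  obtain ⟨C, hC⟩ := ind Finset.univ
  exact ⟨C, fun x hx => hC x hx (by simp)⟩
end

section
/- Let r ≥ 1 be an integer and for k = 1,…,2r let L_k, θ_k ∈ ℝ and ε_k ∈ {−1, +1}. Define the 2×2 real matrices a_k = [[e^{ε_k L_k/2}, 0], [0, e^{−ε_k L_k/2}]] and b_k = [[cosh(θ_k/2), sinh(θ_k/2)], [sinh(θ_k/2), cosh(θ_k/2)]]. Then (1/2)·Tr(a₁b₁a₂b₂⋯a_{2r}b_{2r}) = ∑_{δ} (∏_{k=1}^{2r} hyp_{δ_k}(θ_k/2)) · cosh((1/2) ∑_{k=1}^{2r} ρ^δ_k ε_k L_k), where the sum runs over all δ = (δ₁,…,δ_{2r}) ∈ {−1,+1}^{2r} with δ₁δ₂⋯δ_{2r} = +1, ρ^δ_k := ∏_{1 ≤ j < k} δ_j (equal to 1 for k = 1), and hyp_{+1} = cosh, hyp_{−1} = sinh. -/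
open Real Matrix

open scoped Classical

/-- `hyp_{+1} = cosh`, `hyp_{-1} = sinh`, encoded on booleans: `true ↦ cosh`, `false ↦ sinh`. -/
noncomputable def hypb (b : Bool) (x : ℝ) : ℝ := if b then Real.cosh x else Real.sinh x

/-- The sign `+1`/`-1` attached to a boolean. -/
def sgnb (b : Bool) : ℝ := if b then 1 else -1

noncomputable def gS {n : ℕ} (x : Fin n → ℝ) (δ : Fin n → Bool) : ℝ :=
  ∑ k, (∏ j ∈ Finset.univ.filter (fun j => j < k), sgnb (δ j)) * x k

noncomputable def gW {n : ℕ} (t : Fin n → ℝ) (δ : Fin n → Bool) : ℝ := ∏ k, hypb (δ k) (t k)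

noncomputable def gQ {n : ℕ} (δ : Fin n → Bool) : ℝ := ∏ k, sgnb (δ k)

lemma gS_cons {n : ℕ} (x : Fin (n + 1) → ℝ) (d : Bool) (δ : Fin n → Bool) :
    gS x (Fin.cons d δ : Fin (n + 1) → Bool) = x 0 + sgnb d * gS (fun k => x k.succ) δ := by
  unfold gS
  rw [Fin.sum_univ_succ, Finset.mul_sum]
  congr 1
  · simp
  · refine Finset.sum_congr rfl fun k _ => ?_
    rw [Finset.prod_filter, Finset.prod_filter, Fin.prod_univ_succ]
    simp [mul_assoc]

lemma gW_cons {n : ℕ} (t : Fin (n + 1) → ℝ) (d : Bool) (δ : Fin n → Bool) :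
    gW t (Fin.cons d δ : Fin (n + 1) → Bool) = hypb d (t 0) * gW (fun k => t k.succ) δ := by
  simp [gW, Fin.prod_univ_succ]

lemma gQ_cons {n : ℕ} (d : Bool) (δ : Fin n → Bool) :
    gQ (Fin.cons d δ : Fin (n + 1) → Bool) = sgnb d * gQ δ := by
  simp [gQ, Fin.prod_univ_succ]

lemma sum_cons_bool {n : ℕ} (f : (Fin (n + 1) → Bool) → ℝ) :
    ∑ δ, f δ = ∑ δ : Fin n → Bool, f (Fin.cons true δ) + ∑ δ : Fin n → Bool, f (Fin.cons false δ) := by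
  rw [← (Fin.consEquiv (fun _ : Fin (n + 1) => Bool)).sum_comp, Fintype.sum_prod_type]
  simp [Fin.consEquiv]

lemma gQ_cases {n : ℕ} (δ : Fin n → Bool) : gQ δ = 1 ∨ gQ δ = -1 := by
  induction n with
  | zero => simp [gQ]
  | succ n ih =>
    rw [← Fin.cons_self_tail δ, gQ_cons]
    rcases ih (Fin.tail δ) with h | h <;> cases δ 0 <;> simp [h, sgnb]

lemma prod_entries (n : ℕ) (x t : Fin n → ℝ) :
    (List.ofFn (fun k : Fin n =>
      (!![Real.exp (x k), 0; 0, Real.exp (-x k)] : Matrix (Fin 2) (Fin 2) ℝ) *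
          !![Real.cosh (t k), Real.sinh (t k); Real.sinh (t k), Real.cosh (t k)])).prod =
    !![∑ δ, gW t δ * Real.exp (gS x δ) * ((1 + gQ δ) / 2),
       ∑ δ, gW t δ * Real.exp (gS x δ) * ((1 - gQ δ) / 2);
       ∑ δ, gW t δ * Real.exp (-gS x δ) * ((1 - gQ δ) / 2),
       ∑ δ, gW t δ * Real.exp (-gS x δ) * ((1 + gQ δ) / 2)] := by
  induction n with
  | zero =>
    simp [gW, gS, gQ, Matrix.one_fin_two]
  | succ n ih =>
    rw [List.ofFn_succ, List.prod_cons, ih (fun k => x k.succ) (fun k => t k.succ)]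
    simp only [sum_cons_bool, gS_cons, gW_cons, gQ_cons, Matrix.mul_fin_two]
    ext i j
    fin_cases i <;> fin_cases j <;>
    · simp [hypb, sgnb, Finset.mul_sum, Real.exp_add]
      rw [← Finset.sum_add_distrib, ← Finset.sum_add_distrib]
      refine Finset.sum_congr rfl fun δ _ => ?_
      ring

/-- The trace identity behind the length formula for generalized eights:
`(1/2)·Tr(a₁b₁⋯a_{2r}b_{2r}) = ∑_{δ₁⋯δ_{2r}=+1} ∏ₖ hyp_{δₖ}(θₖ/2) · cosh((1/2)∑ₖ ρ^δₖ εₖ Lₖ)`,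
where `aₖ = diag(e^{εₖLₖ/2}, e^{-εₖLₖ/2})`, `bₖ = [[cosh(θₖ/2), sinh(θₖ/2)];
[sinh(θₖ/2), cosh(θₖ/2)]]` and `ρ^δₖ = ∏_{j<k} δⱼ`. -/
theorem trace_formula_generalized_eight (r : ℕ) (hr : 1 ≤ r)
    (L θ ε : Fin (2 * r) → ℝ) (hε : ∀ k, ε k = 1 ∨ ε k = -1) :
    (1 / 2) * Matrix.trace
        ((List.ofFn (fun k : Fin (2 * r) =>
          (!![Real.exp (ε k * L k / 2), 0; 0, Real.exp (-(ε k * L k) / 2)] :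
              Matrix (Fin 2) (Fin 2) ℝ) *
          !![Real.cosh (θ k / 2), Real.sinh (θ k / 2);
             Real.sinh (θ k / 2), Real.cosh (θ k / 2)])).prod) =
      ∑ δ ∈ Finset.univ.filter
          (fun δ : Fin (2 * r) → Bool => (∏ k, sgnb (δ k)) = 1),
        (∏ k, hypb (δ k) (θ k / 2)) *
          Real.cosh ((1 / 2) * ∑ k,
            (∏ j ∈ Finset.univ.filter (fun j => j < k), sgnb (δ j)) * ε k * L k) := by
  have h := prod_entries (2 * r) (fun k => ε k * L k / 2) (fun k => θ k / 2)
  simp only [← neg_div] at h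
  rw [h, Matrix.trace_fin_two_of, ← Finset.sum_add_distrib, Finset.mul_sum, Finset.sum_filter]
  refine Finset.sum_congr rfl fun δ _ => ?_
  have hS : (1 / 2) * ∑ k, (∏ j ∈ Finset.univ.filter (fun j => j < k), sgnb (δ j)) * ε k * L k
      = gS (fun k => ε k * L k / 2) δ := by
    unfold gS
    rw [Finset.mul_sum]
    exact Finset.sum_congr rfl fun k _ => by ring
  rw [hS, Real.cosh_eq]
  change _ = if gQ δ = 1 then gW (fun k => θ k / 2) δ * _ else 0
  rcases gQ_cases δ with h | h
  · rw [if_pos h, h]; ring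
  · rw [if_neg (by rw [h]; norm_num), h]; ring
end

section
/- Let f : ℝ² → ℝ be a C^∞ function whose support is compact and contained in the open upper half-plane {(x,y) ∈ ℝ² : y > 0}. Then ∫∫_{ℝ²} f(x,y) · (−(∂²f/∂x²(x,y) + ∂²f/∂y²(x,y))) dx dy ≥ (1/4) ∫∫_{ℝ²} f(x,y)²/y² dx dy. Equivalently, for the hyperbolic Laplacian Δ = −y²(∂²/∂x² + ∂²/∂y²) on the hyperbolic plane ℍ = {x+iy : y > 0} with area measure dμ = dx dy / y², one has ∫_ℍ f Δf dμ ≥ (1/4) ∫_ℍ f² dμ, i.e. the operator Δ − (1/4)Id is positive. -/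
open MeasureTheory Real

/-- The second partial derivative `∂²f/∂x²` of `f : ℝ × ℝ → ℝ`. -/
noncomputable def d2x (f : ℝ × ℝ → ℝ) (p : ℝ × ℝ) : ℝ :=
  deriv (deriv (fun x => f (x, p.2))) p.1

/-- The second partial derivative `∂²f/∂y²` of `f : ℝ × ℝ → ℝ`. -/
noncomputable def d2y (f : ℝ × ℝ → ℝ) (p : ℝ × ℝ) : ℝ :=
  deriv (deriv (fun y => f (p.1, y))) p.2

theorem mk_integrable {f F : ℝ × ℝ → ℝ} (hsupp : HasCompactSupport f)
    (hpos : tsupport f ⊆ {p : ℝ × ℝ | 0 < p.2})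
    (hF : ∀ p : ℝ × ℝ, 0 < p.2 → ContinuousAt F p)
    (h0 : ∀ p, p ∉ tsupport f → F p = 0) : Integrable F := by
  have hs : tsupport F ⊆ tsupport f := by
    apply closure_minimal _ (isClosed_tsupport f)
    intro p hp
    by_contra h
    exact hp (h0 p h)
  have hc : Continuous F := continuous_of_tsupport fun p hp => hF p (hpos (hs hp))
  exact hc.integrable_of_hasCompactSupport
    (IsCompact.of_isClosed_subset hsupp (isClosed_tsupport F) hs)

theorem mk_dx {g : ℝ × ℝ → ℝ} (hg : Differentiable ℝ g) (x y : ℝ) :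
    deriv (fun x => g (x, y)) x = fderiv ℝ g (x, y) (1, 0) := by
  have h := (hg (x, y)).hasFDerivAt.comp_hasDerivAt x
    ((hasDerivAt_id x).prodMk (hasDerivAt_const x y))
  exact h.deriv

theorem mk_dy {g : ℝ × ℝ → ℝ} (hg : Differentiable ℝ g) (x y : ℝ) :
    deriv (fun y => g (x, y)) y = fderiv ℝ g (x, y) (0, 1) := by
  have h := (hg (x, y)).hasFDerivAt.comp_hasDerivAt y
    ((hasDerivAt_const y x).prodMk (hasDerivAt_id y))
  exact h.deriv

/-- McKean's inequality: for `f` smooth with compact support contained in the open upper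
half-plane `{y > 0}`, `∫∫ f·(-(f_{xx} + f_{yy})) dx dy ≥ (1/4)∫∫ f²/y² dx dy`.  Equivalently,
for the hyperbolic Laplacian `Δ = -y²(∂²ₓ + ∂²_y)` on `ℍ` with area measure `dμ = dx dy/y²`,
`∫ f Δf dμ ≥ (1/4) ∫ f² dμ`, i.e. `Δ - (1/4)Id ≥ 0` on `L²(ℍ)`. -/
theorem mckean_quarter_bound (f : ℝ × ℝ → ℝ) (hf : ContDiff ℝ (⊤ : ℕ∞) f)
    (hsupp : HasCompactSupport f)
    (hpos : tsupport f ⊆ {p : ℝ × ℝ | 0 < p.2}) :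
    (1 / 4) * ∫ p : ℝ × ℝ, (f p) ^ 2 / p.2 ^ 2 ≤
      ∫ p : ℝ × ℝ, f p * (-(d2x f p + d2y f p)) := by
  have hf1 : Differentiable ℝ f := hf.differentiable (by simp)
  have hD : ContDiff ℝ (⊤ : ℕ∞) (fderiv ℝ f) := hf.fderiv_right (by simp)
  have hdv : ∀ v : ℝ × ℝ, ContDiff ℝ (⊤ : ℕ∞) (fun p => fderiv ℝ f p v) :=
    fun v => hD.clm_apply contDiff_const
  have hdc : ∀ v : ℝ × ℝ, Continuous (fun p => fderiv ℝ f p v) := fun v => (hdv v).continuous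
  have hdd : ∀ v : ℝ × ℝ, Differentiable ℝ (fun p => fderiv ℝ f p v) :=
    fun v => (hdv v).differentiable (by simp)
  have hddc : ∀ v : ℝ × ℝ, Continuous (fun p => fderiv ℝ (fun q => fderiv ℝ f q v) p v) :=
    fun v => ((hdv v).continuous_fderiv (by simp)).clm_apply continuous_const
  have hfc := hf.continuous
  have hf0 : ∀ p, p ∉ tsupport f → f p = 0 := fun p hp => image_eq_zero_of_notMem_tsupport hp
  have hfd0 : ∀ p, p ∉ tsupport f → fderiv ℝ f p = 0 := fun p hp => by
    by_contra h
    exact hp (support_fderiv_subset ℝ h)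
  have hx : ∀ p, d2x f p = fderiv ℝ (fun q => fderiv ℝ f q (1, 0)) p (1, 0) := by
    intro p
    have : deriv (fun x => f (x, p.2)) = fun x => fderiv ℝ f (x, p.2) (1, 0) :=
      funext fun x => mk_dx hf1 x p.2
    rw [d2x, this, mk_dx (hdd (1, 0)) p.1 p.2]
  have hy : ∀ p, d2y f p = fderiv ℝ (fun q => fderiv ℝ f q (0, 1)) p (0, 1) := by
    intro p
    have : deriv (fun y => f (p.1, y)) = fun y => fderiv ℝ f (p.1, y) (0, 1) :=
      funext fun y => mk_dy hf1 p.1 y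
    rw [d2y, this, mk_dy (hdd (0, 1)) p.1 p.2]
  have I1 : ∀ v : ℝ × ℝ, Integrable (fun p => fderiv ℝ f p v * fderiv ℝ f p v) := fun v =>
    mk_integrable hsupp hpos (fun p _ => ((hdc v).mul (hdc v)).continuousAt)
      (fun p hp => by simp [hfd0 p hp])
  have I2 : ∀ v : ℝ × ℝ,
      Integrable (fun p => f p * fderiv ℝ (fun q => fderiv ℝ f q v) p v) := fun v =>
    mk_integrable hsupp hpos (fun p _ => (hfc.mul (hddc v)).continuousAt)
      (fun p hp => by simp [hf0 p hp])
  have I3 : ∀ v : ℝ × ℝ, Integrable (fun p => f p * fderiv ℝ f p v) := fun v =>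
    mk_integrable hsupp hpos (fun p _ => (hfc.mul (hdc v)).continuousAt)
      (fun p hp => by simp [hf0 p hp])
  have ibp : ∀ v : ℝ × ℝ, ∫ p, f p * fderiv ℝ (fun q => fderiv ℝ f q v) p v
      = - ∫ p, fderiv ℝ f p v * fderiv ℝ f p v := fun v =>
    integral_mul_fderiv_eq_neg_fderiv_mul_of_integrable (I1 v) (I2 v) (I3 v)
      (fun p _ => hf1 p) (fun p _ => hdd v p)
  have I4 : Integrable (fun p : ℝ × ℝ => (f p) ^ 2 / p.2 ^ 2) :=
    mk_integrable hsupp hpos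
      (fun p hp => (hfc.pow 2).continuousAt.div (by fun_prop) (by positivity))
      (fun p hp => by simp [hf0 p hp])
  have I5 : Integrable (fun p : ℝ × ℝ => f p * fderiv ℝ f p (0, 1) / p.2) :=
    mk_integrable hsupp hpos
      (fun p hp => (hfc.mul (hdc _)).continuousAt.div (by fun_prop) hp.ne')
      (fun p hp => by simp [hf0 p hp])
  have I6 : Integrable (fun p : ℝ × ℝ => f p ^ 2 * (p.2)⁻¹) :=
    mk_integrable hsupp hpos
      (fun p hp => (hfc.pow 2).continuousAt.mul (continuous_snd.continuousAt.inv₀ hp.ne'))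
      (fun p hp => by simp [hf0 p hp])
  have hsq : ∀ p, fderiv ℝ (fun p => f p ^ 2) p (0, 1) = 2 * f p * fderiv ℝ f p (0, 1) := by
    intro p
    rw [((hf1 p).hasFDerivAt.pow 2).fderiv]
    simp
  have hinv : ∀ p : ℝ × ℝ, 0 < p.2 →
      HasFDerivAt (fun p : ℝ × ℝ => (p.2)⁻¹)
        ((-(p.2 ^ 2)⁻¹) • ContinuousLinearMap.snd ℝ ℝ ℝ) p := by
    intro p hp
    exact (hasDerivAt_inv hp.ne').comp_hasFDerivAt p hasFDerivAt_snd
  have e1 : (fun p : ℝ × ℝ => f p ^ 2 * fderiv ℝ (fun p : ℝ × ℝ => (p.2)⁻¹) p (0, 1))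
      = fun p => -((f p) ^ 2 / p.2 ^ 2) := by
    funext p
    by_cases hp : p ∈ tsupport f
    · rw [(hinv p (hpos hp)).fderiv]
      simp [div_eq_mul_inv]
    · simp [hf0 p hp]
  have e2 : (fun p : ℝ × ℝ => fderiv ℝ (fun p => f p ^ 2) p (0, 1) * (p.2)⁻¹)
      = fun p => 2 * (f p * fderiv ℝ f p (0, 1) / p.2) := by
    funext p
    rw [hsq]
    ring
  have hardy : ∫ p : ℝ × ℝ, (f p) ^ 2 / p.2 ^ 2
      = 2 * ∫ p : ℝ × ℝ, f p * fderiv ℝ f p (0, 1) / p.2 := by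
    have h := integral_mul_fderiv_eq_neg_fderiv_mul_of_integrable
      (μ := (volume : Measure (ℝ × ℝ))) (f := fun p : ℝ × ℝ => f p ^ 2)
      (g := fun p : ℝ × ℝ => (p.2)⁻¹) (v := (0, 1))
      (by rw [e2]; exact I5.const_mul 2) (by rw [e1]; exact I4.neg) I6
      (fun p _ => (hf1 p).pow 2)
      (fun p hp => by
        refine (hinv p (hpos ?_)).differentiableAt
        refine closure_mono ?_ hp
        intro q hq hq0
        exact hq (by simp [hq0]))
    rw [e1, e2, integral_neg, integral_const_mul] at h
    linarith
  have key : ∫ p : ℝ × ℝ, (f p * fderiv ℝ f p (0, 1) / p.2 - (1 / 4) * ((f p) ^ 2 / p.2 ^ 2))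
      ≤ ∫ p, fderiv ℝ f p (0, 1) * fderiv ℝ f p (0, 1) := by
    refine integral_mono (I5.sub (I4.const_mul _)) (I1 _) fun p => ?_
    have h := sq_nonneg (fderiv ℝ f p (0, 1) - (1 / 2) * (f p / p.2))
    have h2 : (fderiv ℝ f p (0, 1) - (1 / 2) * (f p / p.2)) ^ 2
      = fderiv ℝ f p (0, 1) * fderiv ℝ f p (0, 1)
        - (f p * fderiv ℝ f p (0, 1) / p.2 - (1 / 4) * ((f p) ^ 2 / p.2 ^ 2)) := by ring
    show _ ≤ _
    linarith
  rw [integral_sub I5 (I4.const_mul _), integral_const_mul] at key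
  have hx0 : 0 ≤ ∫ p, fderiv ℝ f p (1, 0) * fderiv ℝ f p (1, 0) :=
    integral_nonneg fun p => mul_self_nonneg _
  have e3 : (fun p => f p * (-(d2x f p + d2y f p))) = fun p =>
      -(f p * fderiv ℝ (fun q => fderiv ℝ f q (1, 0)) p (1, 0)
        + f p * fderiv ℝ (fun q => fderiv ℝ f q (0, 1)) p (0, 1)) := by
    funext p
    rw [hx, hy]
    ring
  rw [e3, integral_neg, integral_add (I2 _) (I2 _), ibp, ibp]
  linarith
end
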